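/- arXiv:2509.13264 — 5 statements merged into one kernel-verified Lean document; each statement's English description precedes it below -/
import Mathlib

section
/- Let p be an odd prime, let λ be a bar-partition with p-bar core λ_(p̄) and p-bar cocore λ^[p̄], and let σ be a σ_p-type automorphism of ℚ̄. If sgn(λ_(p̄)) = 1 or sgn(λ^[p̄]) = 1, then τ(λ,σ) = τ(λ_(p̄),σ)·τ(λ^[p̄],σ). -/
open scoped BigOperators

/-- A bar-partition: a finite set of distinct positive parts. -/
structure BarPartition where
  parts : Finset ℕ
  zero_not_mem : 0 ∉ parts

namespace BarPartition

/-- The size `|λ|` of a bar-partition: the sum of its parts. -/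
def size (l : BarPartition) : ℕ := ∑ a ∈ l.parts, a

/-- The length `ℓ(λ)` of a bar-partition: its number of parts. -/
def length (l : BarPartition) : ℕ := l.parts.card

/-- The sign `sgn(λ) = (-1)^(|λ| - ℓ(λ))` of a bar-partition. -/
def sgn (l : BarPartition) : ℤ := (-1) ^ (l.size - l.length)

/-- The empty bar-partition. -/
def empty : BarPartition := ⟨∅, by simp⟩

end BarPartition

/-- One `t`-bar removal step: replace a part `a > t` by `a - t` (if `a - t` is not already a
part), delete a part equal to `t`, or delete two parts whose sum is `t`. -/
def BarRemoval (t : ℕ) (μ ν : BarPartition) : Prop :=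
  (∃ a ∈ μ.parts, t < a ∧ a - t ∉ μ.parts ∧ ν.parts = insert (a - t) (μ.parts.erase a)) ∨
  (t ∈ μ.parts ∧ ν.parts = μ.parts.erase t) ∨
  (∃ a ∈ μ.parts, ∃ b ∈ μ.parts, a ≠ b ∧ a + b = t ∧ ν.parts = (μ.parts.erase a).erase b)

/-- A `t`-bar core: a bar-partition admitting no `t`-bar removal. -/
def IsBarCore (t : ℕ) (κ : BarPartition) : Prop := ∀ ν, ¬ BarRemoval t κ ν

/-- `κ` is the `t`-bar core of `λ`: it is obtained from `λ` by a (maximal) sequence of `t`-bar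
removals and admits no further removal. -/
def IsBarCoreOf (t : ℕ) (l κ : BarPartition) : Prop :=
  Relation.ReflTransGen (BarRemoval t) l κ ∧ IsBarCore t κ

/-- `λ` has empty `t`-bar core. -/
def HasEmptyBarCore (t : ℕ) (l : BarPartition) : Prop :=
  Relation.ReflTransGen (BarRemoval t) l BarPartition.empty

/-- The twisted runner at `r` (for `1 ≤ r ≤ (t-1)/2`) of the `t`-bar-abacus of `λ`, as a set
of integers: position `i ≥ 0` (above the fence) carries a bead iff `t*i + r` is a part of `λ`,
and position `i < 0` (slot `j = -(i+1)` below the fence) carries a bead iff `t*j + (t - r)` is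
*not* a part of `λ` (beads and empty slots of runner `t - r` are interchanged). -/
def twistedRunner (t r : ℕ) (l : BarPartition) : Set ℤ :=
  {i : ℤ | (0 ≤ i ∧ t * i.toNat + r ∈ l.parts) ∨
           (i < 0 ∧ t * (-(i + 1)).toNat + (t - r) ∉ l.parts)}

/-- Two bar-partitions have the same `t`-bar quotient: the runners `0` agree, and for each
`1 ≤ r ≤ (t-1)/2` the twisted runners differ by a shift (the shift by the unique balancing
integer produces the Frobenius symbol of the quotient component, so shift-equivalent twisted
runners are exactly those with equal quotient component). -/
def HasSameBarQuotient (t : ℕ) (l m : BarPartition) : Prop :=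
  (∀ k : ℕ, t * k ∈ l.parts ↔ t * k ∈ m.parts) ∧
  ∀ r : ℕ, 1 ≤ r → 2 * r < t →
    ∃ c : ℤ, twistedRunner t r m = (fun i => i + c) '' twistedRunner t r l

/-- `m` is the `t`-bar cocore of `l`: the unique bar-partition with empty `t`-bar core and the
same `t`-bar quotient as `l`. -/
def IsBarCocoreOf (t : ℕ) (l m : BarPartition) : Prop :=
  HasEmptyBarCore t m ∧ HasSameBarQuotient t l m

/-- A fixed algebraic closure of `ℚ`. -/
abbrev Qbar := AlgebraicClosure ℚ

/-- `σ` is a `σ_p`-type automorphism of `ℚ̄`: it raises every root of unity of order coprime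
to `p` to its `p`-th power, and fixes every root of unity of `p`-power order. -/
def IsSigmaPType (p : ℕ) (σ : Qbar ≃ₐ[ℚ] Qbar) : Prop :=
  (∀ (ζ : Qbar) (n : ℕ), 0 < n → Nat.Coprime n p → ζ ^ n = 1 → σ ζ = ζ ^ p) ∧
  (∀ (ζ : Qbar) (k : ℕ), ζ ^ (p ^ k) = 1 → σ ζ = ζ)

/-- The discriminant `D_λ` attached to a bar-partition `λ` of `n` with `k` parts:
`2·(−1)^((n−k+1)/2)·λ₁⋯λ_k` if `n − k` is odd, and `(−1)^((n−k)/2)·λ₁⋯λ_k` if `n − k` is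
even. -/
def barDisc (l : BarPartition) : ℤ :=
  if (l.size - l.length) % 2 = 1 then
    2 * (-1) ^ ((l.size - l.length + 1) / 2) * ∏ a ∈ l.parts, (a : ℤ)
  else
    (-1) ^ ((l.size - l.length) / 2) * ∏ a ∈ l.parts, (a : ℤ)


/-- The subring of `ℚ̄` generated by the roots of unity of order coprime to `p`. -/
noncomputable def cycRing (p : ℕ) : Subring Qbar :=
  Subring.closure {ζ : Qbar | ∃ n : ℕ, 0 < n ∧ Nat.Coprime n p ∧ ζ ^ n = 1}

theorem cycRing_root {p n : ℕ} (hn : 0 < n) (hc : Nat.Coprime n p) {ζ : Qbar}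
    (h : ζ ^ n = 1) : ζ ∈ cycRing p :=
  Subring.subset_closure ⟨n, hn, hc, h⟩

theorem cycRing_frob {p : ℕ} (hp : p.Prime) (hpodd : Odd p) {σ : Qbar ≃ₐ[ℚ] Qbar}
    (hσ : IsSigmaPType p σ) {x : Qbar} (hx : x ∈ cycRing p) :
    ∃ y ∈ cycRing p, σ x = x ^ p + p * y := by
  induction hx using Subring.closure_induction with
  | mem x hx =>
    obtain ⟨n, hn, hc, h⟩ := hx
    exact ⟨0, zero_mem _, by simp [hσ.1 x n hn hc h]⟩
  | zero => exact ⟨0, zero_mem _, by simp [hp.ne_zero]⟩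
  | one => exact ⟨0, zero_mem _, by simp⟩
  | add x y hx hy ihx ihy =>
    obtain ⟨a, ha, hxa⟩ := ihx
    obtain ⟨b, hb, hyb⟩ := ihy
    obtain ⟨r, hr⟩ := exists_add_pow_prime_eq hp (⟨x, hx⟩ : cycRing p) (⟨y, hy⟩ : cycRing p)
    have hr' := congrArg (Subtype.val) hr
    push_cast at hr'
    refine ⟨a + b - x * y * r, sub_mem (add_mem ha hb) (mul_mem (mul_mem hx hy) r.2), ?_⟩
    rw [map_add, hxa, hyb, hr']
    ring
  | neg x hx ih =>
    obtain ⟨a, ha, hxa⟩ := ih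
    refine ⟨-a, neg_mem ha, ?_⟩
    rw [map_neg, hxa, hpodd.neg_pow]
    ring
  | mul x y hx hy ihx ihy =>
    obtain ⟨a, ha, hxa⟩ := ihx
    obtain ⟨b, hb, hyb⟩ := ihy
    refine ⟨x ^ p * b + a * y ^ p + p * a * b, ?_, ?_⟩
    · exact add_mem (add_mem (mul_mem (pow_mem hx _) hb) (mul_mem ha (pow_mem hy _)))
        (mul_mem (mul_mem (natCast_mem _ _) ha) hb)
    · rw [map_mul, hxa, hyb]
      ring

theorem cycRing_integral {p : ℕ} {x : Qbar} (hx : x ∈ cycRing p) : IsIntegral ℤ x := by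
  induction hx using Subring.closure_induction with
  | mem x hx =>
    obtain ⟨n, hn, hc, h⟩ := hx
    exact IsIntegral.of_pow hn (by rw [h]; exact isIntegral_one)
  | zero => exact isIntegral_zero
  | one => exact isIntegral_one
  | add x y hx hy ihx ihy => exact ihx.add ihy
  | neg x hx ih => exact ih.neg
  | mul x y hx hy ihx ihy => exact ihx.mul ihy

theorem cycRing_sqrt_neg_one {p : ℕ} (hpodd : Odd p) : ∃ i ∈ cycRing p, i ^ 2 = (-1 : Qbar) := by
  obtain ⟨i, hi⟩ := IsAlgClosed.exists_pow_nat_eq (-1 : Qbar) (n := 2) (by norm_num)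
  refine ⟨i, cycRing_root (n := 4) (by norm_num) ?_ ?_, hi⟩
  · exact Nat.Coprime.pow_left 2 (Nat.coprime_two_left.2 hpodd)
  · calc i ^ 4 = (i ^ 2) ^ 2 := by ring
      _ = 1 := by rw [hi]; ring

theorem cycRing_sqrt_prime {p : ℕ} (hp : p.Prime) (hpodd : Odd p) {q : ℕ} (hq : q.Prime)
    (hqp : q ≠ p) : ∃ a ∈ cycRing p, a ^ 2 = (q : Qbar) := by
  obtain ⟨i, hiR, hi⟩ := cycRing_sqrt_neg_one hpodd
  rcases hq.eq_two_or_odd' with rfl | hqodd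
  · obtain ⟨z, hz⟩ := IsAlgClosed.exists_pow_nat_eq i (n := 2) (by norm_num)
    have hz8 : z ^ 8 = 1 := by
      calc z ^ 8 = ((z ^ 2) ^ 2) ^ 2 := by ring
        _ = 1 := by rw [hz, hi]; ring
    have hzR : z ∈ cycRing p := cycRing_root (n := 8) (by norm_num)
      (Nat.Coprime.pow_left 3 (Nat.coprime_two_left.2 hpodd)) hz8
    refine ⟨z + z ^ 7, add_mem hzR (pow_mem hzR _), ?_⟩
    calc (z + z ^ 7) ^ 2 = z ^ 2 + 2 * z ^ 8 + z ^ 8 * ((z ^ 2) ^ 2) * z ^ 2 := by ring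
      _ = _ := by rw [hz8, hz, hi]; push_cast; ring
  · have : Fact q.Prime := ⟨hq⟩
    obtain ⟨ζ, hζ⟩ := HasEnoughRootsOfUnity.exists_primitiveRoot Qbar q
    set χ : MulChar (ZMod q) Qbar :=
      (quadraticChar (ZMod q)).ringHomComp (Int.castRingHom Qbar) with hχ
    have hχ1 : χ ≠ 1 := (MulChar.ringHomComp_ne_one_iff (Int.cast_injective)).2
      (quadraticChar_ne_one (by
        rw [ZMod.ringChar_zmod_n]; rintro rfl; revert hqodd; decide))
    have hχ2 : χ.IsQuadratic := (quadraticChar_isQuadratic (ZMod q)).comp _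
    have hsq := gaussSum_sq hχ1 hχ2 (AddChar.zmodChar_primitive_of_primitive_root q hζ)
    have hint : ∀ a, χ a ∈ cycRing p := by
      intro a
      rw [hχ, MulChar.ringHomComp_apply]
      exact intCast_mem _ _
    have hζR : ζ ∈ cycRing p :=
      cycRing_root hq.pos ((Nat.coprime_primes hq hp).2 hqp) hζ.pow_eq_one
    have hmem : gaussSum χ (AddChar.zmodChar q hζ.pow_eq_one) ∈ cycRing p := by
      unfold gaussSum
      refine sum_mem fun a _ => mul_mem (hint a) ?_
      rw [AddChar.zmodChar_apply]
      exact pow_mem hζR _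
    rw [ZMod.card] at hsq
    rcases hχ2 (-1) with h | h | h
    · exfalso
      rw [h, zero_mul] at hsq
      have := (isUnit_neg_one (α := ZMod q)).map χ
      rw [h] at this
      exact not_isUnit_zero this
    · exact ⟨_, hmem, by rw [hsq, h, one_mul]⟩
    · refine ⟨_, mul_mem hiR hmem, ?_⟩
      rw [mul_pow, hsq, h, hi]; ring

theorem cycRing_sqrt_nat {p : ℕ} (hp : p.Prime) (hpodd : Odd p) (n : ℕ) :
    ¬ p ∣ n → ∃ a ∈ cycRing p, a ^ 2 = (n : Qbar) := by
  induction n using induction_on_primes with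
  | zero => simp
  | one => exact fun _ => ⟨1, one_mem _, by simp⟩
  | prime_mul q a hq ih =>
    intro h
    obtain ⟨x, hx, hx2⟩ := ih (fun h' => h (h'.mul_left _))
    obtain ⟨y, hy, hy2⟩ := cycRing_sqrt_prime hp hpodd hq (fun h' => h (h' ▸ dvd_mul_right _ _))
    exact ⟨y * x, mul_mem hy hx, by rw [mul_pow, hx2, hy2]; push_cast; ring⟩

theorem cycRing_sqrt_int {p : ℕ} (hp : p.Prime) (hpodd : Odd p) (n : ℤ)
    (h : ¬ (p : ℤ) ∣ n) : ∃ a ∈ cycRing p, a ^ 2 = (n : Qbar) := by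
  obtain ⟨x, hx, hx2⟩ := cycRing_sqrt_nat hp hpodd n.natAbs
    (fun h' => h (Int.natCast_dvd.2 h'))
  rcases Int.natAbs_eq n with h1 | h1
  · exact ⟨x, hx, by rw [hx2]; conv_rhs => rw [h1]
                     simp⟩
  · obtain ⟨i, hiR, hi⟩ := cycRing_sqrt_neg_one hpodd
    refine ⟨i * x, mul_mem hiR hx, ?_⟩
    rw [mul_pow, hi, hx2]; conv_rhs => rw [h1]
    simp

theorem sigma_sqrt {p : ℕ} [Fact p.Prime] (hpodd : Odd p) {σ : Qbar ≃ₐ[ℚ] Qbar}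
    (hσ : IsSigmaPType p σ) (D : ℤ) (h : ¬ (p : ℤ) ∣ D) (β : Qbar) (hβ : β ^ 2 = (D : Qbar)) :
    σ β = (legendreSym p D : Qbar) * β := by
  have hp : p.Prime := Fact.out
  have hD0 : (D : ZMod p) ≠ 0 := fun h' => h ((ZMod.intCast_zmod_eq_zero_iff_dvd _ _).1 h')
  have hβR : β ∈ cycRing p := by
    obtain ⟨a, ha, ha2⟩ := cycRing_sqrt_int hp hpodd D h
    rcases sq_eq_sq_iff_eq_or_eq_neg.1 (ha2.trans hβ.symm) with rfl | h'
    · exact ha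
    · rw [← neg_eq_iff_eq_neg.2 h']; exact neg_mem ha
  obtain ⟨y, hy, hσy⟩ := cycRing_frob hp hpodd hσ hβR
  have hσ2 : σ β = β ∨ σ β = -β := by
    apply sq_eq_sq_iff_eq_or_eq_neg.1
    rw [← map_pow, hβ, map_intCast]
  obtain ⟨k, hk⟩ : (p : ℤ) ∣ D ^ (p / 2) - legendreSym p D := by
    rw [← ZMod.intCast_zmod_eq_zero_iff_dvd]
    push_cast
    rw [legendreSym.eq_pow, sub_self]
  have hpow : β ^ p = β * ((legendreSym p D : Qbar) + p * k) := by
    have h1 : p = 2 * (p / 2) + 1 := by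
      obtain ⟨m, rfl⟩ := hpodd; omega
    have h2 : ((D : Qbar)) ^ (p / 2) = (legendreSym p D : Qbar) + p * k := by
      have := congrArg (Int.cast : ℤ → Qbar) (sub_eq_iff_eq_add'.1 hk)
      push_cast at this
      exact this
    rw [← h2, ← hβ, ← pow_mul, ← pow_succ']
    congr 1
  rw [hpow] at hσy
  by_contra hne
  have hne' : σ β = - ((legendreSym p D : Qbar) * β) := by
    rcases legendreSym.eq_one_or_neg_one p hD0 with h1 | h1 <;> rw [h1] at hne ⊢ <;>
      push_cast at hne ⊢
    · rcases hσ2 with h2 | h2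
      · exact absurd (by rw [h2, one_mul]) hne
      · rw [h2, one_mul]
    · rcases hσ2 with h2 | h2
      · rw [h2]; ring
      · exact absurd (by rw [h2]; ring) hne
  set z : Qbar := β * k + y with hz
  have hzR : z ∈ cycRing p := add_mem (mul_mem hβR (intCast_mem _ _)) hy
  have h3 : - 2 * ((legendreSym p D : Qbar) * β) = p * z := by
    rw [hz]; linear_combination hσy - hne'
  have hl2 : ((legendreSym p D : Qbar)) ^ 2 = 1 := by
    have := legendreSym.sq_one p hD0
    exact_mod_cast this
  have h4 : (4 * D : Qbar) = p ^ 2 * z ^ 2 := by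
    rw [← mul_pow, ← h3, mul_pow, mul_pow, hl2, hβ]; ring
  have hp0 : (p : Qbar) ≠ 0 := Nat.cast_ne_zero.2 hp.ne_zero
  have hint : IsIntegral ℤ ((4 * D / p ^ 2 : ℚ)) := by
    have h5 : IsIntegral ℤ (algebraMap ℚ Qbar (4 * D / p ^ 2 : ℚ)) := by
      have : algebraMap ℚ Qbar (4 * D / p ^ 2 : ℚ) = z ^ 2 := by
        push_cast
        simp only [map_intCast, map_ofNat]
        rw [h4]; field_simp
      rw [this]
      exact (cycRing_integral hzR).pow 2
    exact (isIntegral_algebraMap_iff (algebraMap ℚ Qbar).injective).1 h5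
  obtain ⟨m, hm⟩ := IsIntegrallyClosed.isIntegral_iff.1 hint
  have hpq : (p : ℚ) ≠ 0 := Nat.cast_ne_zero.2 hp.ne_zero
  have h6 : 4 * D = p ^ 2 * m := by
    have : (4 * D : ℚ) = p ^ 2 * m := by
      simp only [eq_intCast] at hm
      rw [hm]; field_simp
    exact_mod_cast this
  have h7 : (p : ℤ) ∣ 2 * 2 * D := ⟨p * m, by linear_combination h6⟩
  have hpi : Prime (p : ℤ) := Nat.prime_iff_prime_int.1 hp
  have hp2 : ¬ (p : ℤ) ∣ 2 := by
    intro h8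
    have : p ∣ 2 := by exact_mod_cast h8
    have := (Nat.prime_dvd_prime_iff_eq hp Nat.prime_two).1 this
    subst this; revert hpodd; decide
  rcases hpi.dvd_or_dvd h7 with h8 | h8
  · rcases hpi.dvd_or_dvd h8 with h9 | h9 <;> exact hp2 h9
  · exact h h8

@[to_additive]
theorem prod_barRemoval {M : Type*} [CommMonoid M] {t : ℕ} (g : ℕ → M)
    (h1 : ∀ a, g (a + t) = g a) (h2 : g t = 1)
    (h3 : ∀ a b, a + b = t → a ≠ b → g a * g b = 1) {μ ν : BarPartition}
    (h : BarRemoval t μ ν) : ∏ x ∈ μ.parts, g x = ∏ x ∈ ν.parts, g x := by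
  rcases h with ⟨a, ha, hta, hn, hν⟩ | ⟨ha, hν⟩ | ⟨a, ha, b, hb, hab, hs, hν⟩
  · rw [hν, Finset.prod_insert (fun h' => hn (Finset.mem_of_mem_erase h')),
      ← Finset.mul_prod_erase _ _ ha, ← h1 (a - t), Nat.sub_add_cancel hta.le]
  · rw [hν, ← Finset.mul_prod_erase _ _ ha, h2, one_mul]
  · rw [hν, ← Finset.mul_prod_erase _ _ ha,
      ← Finset.mul_prod_erase _ _ (Finset.mem_erase.2 ⟨hab.symm, hb⟩), ← mul_assoc, h3 a b hs hab,
      one_mul]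

@[to_additive]
theorem prod_barRemovals {M : Type*} [CommMonoid M] {t : ℕ} (g : ℕ → M)
    (h1 : ∀ a, g (a + t) = g a) (h2 : g t = 1)
    (h3 : ∀ a b, a + b = t → a ≠ b → g a * g b = 1) {μ ν : BarPartition}
    (h : Relation.ReflTransGen (BarRemoval t) μ ν) :
    ∏ x ∈ μ.parts, g x = ∏ x ∈ ν.parts, g x := by
  induction h with
  | refl => rfl
  | tail _ h ih => rw [ih, prod_barRemoval g h1 h2 h3 h]

/-- Contribution of a part to the charge of the twisted runner `r`. -/
def gch (p r x : ℕ) : ℤ := if x % p = r then 1 else if x % p = p - r then -1 else 0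

/-- Contribution of a part to the energy of the twisted runner `r`. -/
def mch (p r x : ℕ) : ℤ :=
  if x % p = r then (x / p : ℕ) else if x % p = p - r then (x / p : ℕ) + 1 else 0

theorem part_decomp {p : ℕ} (hpodd : Odd p) (x : ℕ) :
    (x : ℤ) = ∑ r ∈ Finset.Icc 1 (p / 2), (p * mch p r x + r * gch p r x) +
      (if p ∣ x then (x : ℤ) else 0) := by
  obtain ⟨m, hm⟩ := hpodd
  have hp0 : 0 < p := by omega
  have hx := Nat.div_add_mod x p
  have hlt := Nat.mod_lt x hp0
  have hxz : (p : ℤ) * ((x / p : ℕ) : ℤ) + ((x % p : ℕ) : ℤ) = x := by exact_mod_cast hx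
  by_cases h0 : x % p = 0
  · rw [if_pos (Nat.dvd_of_mod_eq_zero h0), Finset.sum_eq_zero, zero_add]
    intro r hr
    rw [Finset.mem_Icc] at hr
    unfold mch gch
    rw [if_neg (by omega), if_neg (by omega), if_neg (by omega), if_neg (by omega)]
    simp
  · rw [if_neg (fun h => h0 (Nat.mod_eq_zero_of_dvd h)), add_zero]
    by_cases h1 : x % p ≤ p / 2
    · rw [Finset.sum_eq_single (x % p)]
      · unfold mch gch
        rw [if_pos rfl, if_pos rfl]; linarith
      · intro r hr hne
        rw [Finset.mem_Icc] at hr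
        unfold mch gch
        rw [if_neg (by omega), if_neg (by omega), if_neg (by omega), if_neg (by omega)]
        simp
      · intro h; exact absurd (Finset.mem_Icc.2 ⟨by omega, h1⟩) h
    · rw [Finset.sum_eq_single (p - x % p)]
      · unfold mch gch
        rw [if_neg (by omega), if_pos (by omega), if_neg (by omega), if_pos (by omega)]
        push_cast [Nat.cast_sub hlt.le]
        push_cast at hxz
        linarith
      · intro r hr hne
        rw [Finset.mem_Icc] at hr
        unfold mch gch
        rw [if_neg (by omega), if_neg (by omega), if_neg (by omega), if_neg (by omega)]
        simp
      · intro h; exact absurd (Finset.mem_Icc.2 ⟨by omega, by omega⟩) h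

theorem window_pos {p r : ℕ} (hr : 2 * r < p) (l : BarPartition) (f : ℤ → ℤ) (b : ℤ)
    (hb : ∀ x ∈ l.parts, (x : ℤ) < b) [DecidablePred (· ∈ twistedRunner p r l)] :
    ∑ i ∈ Finset.Ico 0 b, (if i ∈ twistedRunner p r l then f i else 0) =
      ∑ x ∈ l.parts, (if x % p = r then f (x / p : ℕ) else 0) := by
  have hp0 : 0 < p := by omega
  rw [← Finset.sum_filter, ← Finset.sum_filter]
  refine Finset.sum_nbij' (fun i => p * i.toNat + r) (fun x => ((x / p : ℕ) : ℤ)) ?_ ?_ ?_ ?_ ?_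
  · intro i hi
    simp only [Finset.mem_filter, Finset.mem_Ico, twistedRunner, Set.mem_setOf_eq] at hi ⊢
    obtain ⟨⟨h0, _⟩, h | h⟩ := hi
    · refine ⟨h.2, ?_⟩
      rw [Nat.mul_add_mod, Nat.mod_eq_of_lt (by omega)]
    · omega
  · intro x hx
    simp only [Finset.mem_filter, Finset.mem_Ico, twistedRunner, Set.mem_setOf_eq] at hx ⊢
    have h1 := hb x hx.1
    have h2 : x / p ≤ x := Nat.div_le_self _ _
    have h3 := Nat.div_add_mod x p
    refine ⟨⟨by positivity, by omega⟩, Or.inl ⟨by positivity, ?_⟩⟩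
    rw [Int.toNat_natCast, ← hx.2, h3]; exact hx.1
  · intro i hi
    simp only [Finset.mem_filter, Finset.mem_Ico] at hi
    rw [Nat.mul_add_div hp0, Nat.div_eq_of_lt (by omega)]
    omega
  · intro x hx
    simp only [Finset.mem_filter] at hx
    rw [Int.toNat_natCast, ← hx.2, Nat.div_add_mod]
  · intro i hi
    simp only [Finset.mem_filter, Finset.mem_Ico] at hi
    rw [Nat.mul_add_div hp0, Nat.div_eq_of_lt (by omega), add_zero, Int.toNat_of_nonneg hi.1.1]

theorem window_neg {p r : ℕ} (hr0 : 1 ≤ r) (hr : 2 * r < p) (l : BarPartition) (f : ℤ → ℤ) (a : ℤ)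
    (ha : ∀ x ∈ l.parts, a < -(x : ℤ)) [DecidablePred (· ∈ twistedRunner p r l)] :
    ∑ i ∈ Finset.Ico a 0, (if i ∈ twistedRunner p r l then 0 else f i) =
      ∑ x ∈ l.parts, (if x % p = p - r then f (-((x / p : ℕ) : ℤ) - 1) else 0) := by
  have hp0 : 0 < p := by omega
  have h' : ∀ i ∈ Finset.Ico a 0, (if i ∈ twistedRunner p r l then 0 else f i) =
      (if i ∉ twistedRunner p r l then f i else 0) := by
    intro i _; split_ifs <;> rfl
  rw [Finset.sum_congr rfl h', ← Finset.sum_filter, ← Finset.sum_filter]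
  refine Finset.sum_nbij' (fun i => p * (-(i + 1)).toNat + (p - r))
    (fun x => -((x / p : ℕ) : ℤ) - 1) ?_ ?_ ?_ ?_ ?_
  · intro i hi
    simp only [Finset.mem_filter, Finset.mem_Ico, twistedRunner, Set.mem_setOf_eq, not_or,
      not_and, not_not] at hi ⊢
    obtain ⟨⟨_, h0⟩, _, h⟩ := hi
    refine ⟨h h0, ?_⟩
    rw [Nat.mul_add_mod, Nat.mod_eq_of_lt (by omega)]
  · intro x hx
    simp only [Finset.mem_filter, Finset.mem_Ico, twistedRunner, Set.mem_setOf_eq, not_or,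
      not_and, not_not] at hx ⊢
    have h1 := ha x hx.1
    have h2 : x / p ≤ x := Nat.div_le_self _ _
    have h3 := Nat.div_add_mod x p
    have h4 : (0 : ℤ) ≤ ((x / p : ℕ) : ℤ) := Int.natCast_nonneg _
    refine ⟨⟨by omega, by omega⟩, by omega, fun _ => ?_⟩
    rw [show (-(-((x / p : ℕ) : ℤ) - 1 + 1)) = ((x / p : ℕ) : ℤ) by ring, Int.toNat_natCast,
      ← hx.2, h3]
    exact hx.1
  · intro i hi
    simp only [Finset.mem_filter, Finset.mem_Ico] at hi
    rw [Nat.mul_add_div hp0, Nat.div_eq_of_lt (by omega)]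
    omega
  · intro x hx
    simp only [Finset.mem_filter] at hx
    rw [show (-(-((x / p : ℕ) : ℤ) - 1 + 1)) = ((x / p : ℕ) : ℤ) by ring, Int.toNat_natCast,
      ← hx.2, Nat.div_add_mod]
  · intro i hi
    simp only [Finset.mem_filter, Finset.mem_Ico] at hi
    rw [Nat.mul_add_div hp0, Nat.div_eq_of_lt (by omega), add_zero]
    congr 1
    omega

theorem window {p r : ℕ} (hr0 : 1 ≤ r) (hr : 2 * r < p) (l : BarPartition) (f : ℤ → ℤ) (a b : ℤ)
    (ha0 : a ≤ 0) (hb0 : 0 ≤ b) (hb : ∀ x ∈ l.parts, (x : ℤ) < b)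
    (ha : ∀ x ∈ l.parts, a < -(x : ℤ)) [DecidablePred (· ∈ twistedRunner p r l)] :
    ∑ i ∈ Finset.Ico a b, (if i ∈ twistedRunner p r l then f i else 0) =
      ∑ i ∈ Finset.Ico a 0, f i + ∑ x ∈ l.parts, (if x % p = r then f (x / p : ℕ)
        else if x % p = p - r then - f (-((x / p : ℕ) : ℤ) - 1) else 0) := by
  have h1 := window_pos hr l f b hb
  have h2 := window_neg hr0 hr l f a ha
  have h3 : ∑ i ∈ Finset.Ico a 0, f i =
      ∑ i ∈ Finset.Ico a 0, (if i ∈ twistedRunner p r l then f i else 0) +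
      ∑ i ∈ Finset.Ico a 0, (if i ∈ twistedRunner p r l then 0 else f i) := by
    rw [← Finset.sum_add_distrib]
    refine Finset.sum_congr rfl fun i _ => ?_
    split_ifs <;> simp
  have h4 : ∑ x ∈ l.parts, (if x % p = r then f (x / p : ℕ)
        else if x % p = p - r then - f (-((x / p : ℕ) : ℤ) - 1) else 0) =
      ∑ x ∈ l.parts, (if x % p = r then f (x / p : ℕ) else 0) -
      ∑ x ∈ l.parts, (if x % p = p - r then f (-((x / p : ℕ) : ℤ) - 1) else 0) := by
    rw [← Finset.sum_sub_distrib]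
    refine Finset.sum_congr rfl fun x _ => ?_
    split_ifs
    · omega
    all_goals simp
  have h5 := Finset.sum_union (s₁ := Finset.Ico a 0) (s₂ := Finset.Ico 0 b)
    (f := fun i => if i ∈ twistedRunner p r l then f i else 0)
    (Finset.Ico_disjoint_Ico_consecutive a 0 b)
  rw [Finset.Ico_union_Ico_eq_Ico ha0 hb0] at h5
  rw [h5, h4, h3, h1, h2]
  ring

theorem two_sum_Ico_neg (a : ℤ) (ha : a ≤ 0) : 2 * ∑ i ∈ Finset.Ico a 0, i = a * (1 - a) := by
  obtain ⟨n, hn⟩ := Int.eq_ofNat_of_zero_le (neg_nonneg.2 ha)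
  obtain rfl : a = -(n : ℤ) := by omega
  clear hn ha
  induction n with
  | zero => simp
  | succ n ih =>
    have : Finset.Ico (-((n + 1 : ℕ) : ℤ)) 0 = insert (-((n + 1 : ℕ) : ℤ)) (Finset.Ico (-(n : ℤ)) 0) := by
      ext i; simp only [Finset.mem_Ico, Finset.mem_insert]; omega
    rw [this, Finset.sum_insert (by simp), mul_add, ih]
    push_cast; ring

/-- Charge of the twisted runner. -/
def charge (p r : ℕ) (l : BarPartition) : ℤ := ∑ x ∈ l.parts, gch p r x

/-- Energy of the twisted runner. -/
def energy (p r : ℕ) (l : BarPartition) : ℤ := ∑ x ∈ l.parts, mch p r x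

/-- Twice the size of the quotient component. -/
def wt (p r : ℕ) (l : BarPartition) : ℤ :=
  2 * energy p r l - charge p r l * (charge p r l - 1)

theorem wt_shift {p r : ℕ} (hr0 : 1 ≤ r) (hr : 2 * r < p) (l m : BarPartition) (c : ℤ)
    (h : twistedRunner p r m = (fun i => i + c) '' twistedRunner p r l) :
    wt p r m = wt p r l := by
  classical
  obtain ⟨N, hN⟩ : ∃ N : ℕ, ∀ x ∈ l.parts ∪ m.parts, x < N :=
    ⟨(l.parts ∪ m.parts).sup id + 1, fun x hx => Nat.lt_succ_of_le (Finset.le_sup (f := id) hx)⟩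
  have hNl : ∀ x ∈ l.parts, x < N := fun x hx => hN x (Finset.mem_union_left _ hx)
  have hNm : ∀ x ∈ m.parts, x < N := fun x hx => hN x (Finset.mem_union_right _ hx)
  set K : ℤ := N + |c| with hK
  have hc1 := neg_abs_le c
  have hc2 := le_abs_self c
  have key : ∀ f : ℤ → ℤ, ∑ i ∈ Finset.Ico (-K + c) (K + c),
      (if i ∈ twistedRunner p r m then f i else 0) =
      ∑ i ∈ Finset.Ico (-K) K, (if i ∈ twistedRunner p r l then f (i + c) else 0) := by
    intro f
    rw [← Finset.map_add_right_Ico, Finset.sum_map]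
    refine Finset.sum_congr rfl fun i _ => ?_
    have : i + c ∈ twistedRunner p r m ↔ i ∈ twistedRunner p r l := by
      rw [h]; simp
    simp only [addRightEmbedding_apply, this]
  have wl := fun f => window hr0 hr l f (-K) K (by omega) (by omega)
    (fun x hx => by have := hNl x hx; omega) (fun x hx => by have := hNl x hx; omega)
  have wm := fun f => window hr0 hr m f (-K + c) (K + c) (by omega) (by omega)
    (fun x hx => by have := hNm x hx; omega) (fun x hx => by have := hNm x hx; omega)
  have e1 : ∀ n : BarPartition, ∑ x ∈ n.parts, (if x % p = r then (1 : ℤ)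
        else if x % p = p - r then - 1 else 0) = charge p r n := fun n => rfl
  have e2 : ∀ n : BarPartition, ∑ x ∈ n.parts, (if x % p = r then ((x / p : ℕ) : ℤ)
        else if x % p = p - r then -(-((x / p : ℕ) : ℤ) - 1) else 0) = energy p r n := by
    intro n
    refine Finset.sum_congr rfl fun x _ => ?_
    unfold mch
    split_ifs <;> ring
  have c0 := key (fun _ => 1)
  have c1 := key (fun i => i)
  have s0 : ∑ i ∈ Finset.Ico (-K) K, (if i ∈ twistedRunner p r l then (i + c) else 0) =
      ∑ i ∈ Finset.Ico (-K) K, (if i ∈ twistedRunner p r l then i else 0) +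
      c * ∑ i ∈ Finset.Ico (-K) K, (if i ∈ twistedRunner p r l then 1 else 0) := by
    rw [Finset.mul_sum, ← Finset.sum_add_distrib]
    refine Finset.sum_congr rfl fun i _ => ?_
    split_ifs <;> ring
  rw [s0] at c1
  rw [wm (fun _ => 1), wl (fun _ => 1)] at c0
  rw [wm (fun i => i), wl (fun i => i), wl (fun _ => 1)] at c1
  have a1 := two_sum_Ico_neg (-K) (by omega)
  have a2 := two_sum_Ico_neg (-K + c) (by omega)
  have b1 : ∑ i ∈ Finset.Ico (-K) 0, (1 : ℤ) = K := by
    simp; omega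
  have b2 : ∑ i ∈ Finset.Ico (-K + c) 0, (1 : ℤ) = K - c := by
    simp; omega
  rw [e1, e1, b1, b2] at c0
  rw [e1, e2, e2, b1] at c1
  have hq : charge p r m = charge p r l + c := by linarith
  unfold wt
  rw [hq]
  linear_combination 2 * c1 - a2 + a1

theorem core_shift {p r : ℕ} (hr0 : 1 ≤ r) (hr : 2 * r < p) (κ : BarPartition)
    (hκ : IsBarCore p κ) :
    ∃ c : ℤ, twistedRunner p r κ = (fun i => i + c) '' twistedRunner p r BarPartition.empty := by
  classical
  have hp0 : 0 < p := by omega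
  obtain ⟨N, hN⟩ : ∃ N : ℕ, ∀ x ∈ κ.parts, x < N :=
    ⟨κ.parts.sup id + 1, fun x hx => Nat.lt_succ_of_le (Finset.le_sup (f := id) hx)⟩
  have hmul : ∀ y : ℕ, y ≤ p * y := fun y => Nat.le_mul_of_pos_left _ hp0
  have hz : ∀ x ∈ κ.parts, 0 < x := fun x hx =>
    Nat.pos_of_ne_zero (fun h => κ.zero_not_mem (h ▸ hx))
  have sl : ∀ a ∈ κ.parts, p < a → a - p ∈ κ.parts := by
    intro a ha hpa
    by_contra hn
    refine hκ ⟨insert (a - p) (κ.parts.erase a), ?_⟩ (Or.inl ⟨a, ha, hpa, hn, rfl⟩)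
    simp only [Finset.mem_insert, Finset.mem_erase, not_or, not_and]
    exact ⟨by omega, fun _ => κ.zero_not_mem⟩
  have pr : ∀ a ∈ κ.parts, ∀ b ∈ κ.parts, a ≠ b → a + b ≠ p := by
    intro a ha b hb hab hs
    refine hκ ⟨(κ.parts.erase a).erase b, ?_⟩ (Or.inr (Or.inr ⟨a, ha, b, hb, hab, hs, rfl⟩))
    simp only [Finset.mem_erase, not_and]
    exact fun _ _ => κ.zero_not_mem
  have step : ∀ i : ℤ, i + 1 ∈ twistedRunner p r κ → i ∈ twistedRunner p r κ := by
    intro i hi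
    simp only [twistedRunner, Set.mem_setOf_eq] at hi ⊢
    rcases lt_trichotomy i (-1) with h | h | h
    · refine Or.inr ⟨by omega, fun hm => ?_⟩
      obtain ⟨j, hj⟩ : ∃ j : ℕ, i = -(j : ℤ) - 2 := ⟨(-i - 2).toNat, by omega⟩
      subst hj
      rcases hi with hi | hi
      · omega
      · apply hi.2
        rw [show (-(-(j : ℤ) - 2 + 1 + 1)).toNat = j by omega]
        rw [show (-(-(j : ℤ) - 2 + 1)).toNat = j + 1 by omega] at hm
        have := sl _ hm (by rw [mul_add]; omega)
        rwa [show p * (j + 1) + (p - r) - p = p * j + (p - r) by rw [mul_add]; omega] at this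
    · subst h
      refine Or.inr ⟨by omega, fun hm => ?_⟩
      rcases hi with hi | hi
      · simp at hm hi
        exact pr _ hi _ hm (by omega) (by omega)
      · omega
    · refine Or.inl ⟨by omega, ?_⟩
      obtain ⟨j, hj⟩ : ∃ j : ℕ, i = j := ⟨i.toNat, by omega⟩
      subst hj
      rcases hi with hi | hi
      · have hm := hi.2
        rw [show ((j : ℤ) + 1).toNat = j + 1 by omega] at hm
        have := sl _ hm (by rw [mul_add]; omega)
        rw [Int.toNat_natCast]
        rwa [show p * (j + 1) + r - p = p * j + r by rw [mul_add]; omega] at this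
      · omega
  obtain ⟨z, hzm, hzmax⟩ := Int.exists_greatest_of_bdd (P := fun i => i ∈ twistedRunner p r κ)
    ⟨N, fun i hi => by
      by_contra hlt
      rcases hi with hi | hi
      · have := hN _ hi.2
        have := hmul i.toNat
        omega
      · omega⟩
    ⟨-(N : ℤ) - 1, Or.inr ⟨by omega, fun hm => by
      have := hN _ hm
      rw [show (-(-(N : ℤ) - 1 + 1)).toNat = N by omega] at this
      have := hmul N
      omega⟩⟩
  refine ⟨z + 1, ?_⟩
  have down : ∀ n : ℕ, z - n ∈ twistedRunner p r κ := by
    intro n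
    induction n with
    | zero => simpa using hzm
    | succ n ih =>
      apply step
      rwa [show z - ((n + 1 : ℕ) : ℤ) + 1 = z - n by push_cast; ring]
  ext i
  constructor
  · intro hi
    have := hzmax i hi
    refine ⟨i - (z + 1), Or.inr ⟨by omega, by simp [BarPartition.empty]⟩, by simp⟩
  · rintro ⟨j, hj, rfl⟩
    have hj0 : j < 0 := by
      rcases hj with hj | hj
      · simp [BarPartition.empty] at hj
      · exact hj.1
    have := down (-(j + 1)).toNat
    rwa [show z - ((-(j + 1)).toNat : ℤ) = j + (z + 1) by omega] at this

theorem core_no_mult {p : ℕ} (hp0 : 0 < p) (κ : BarPartition) (hκ : IsBarCore p κ) (k : ℕ) :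
    p * k ∉ κ.parts := by
  induction k with
  | zero => simpa using κ.zero_not_mem
  | succ k ih =>
    intro h
    rcases Nat.eq_zero_or_pos k with rfl | hk
    · rw [zero_add, mul_one] at h
      exact hκ ⟨κ.parts.erase p, fun h' => κ.zero_not_mem (Finset.mem_of_mem_erase h')⟩
        (Or.inr (Or.inl ⟨h, rfl⟩))
    · have h1 : p * (k + 1) - p = p * k := by rw [mul_add]; omega
      have h2 : 0 < p * k := Nat.mul_pos hp0 hk
      refine hκ ⟨insert (p * k) (κ.parts.erase (p * (k + 1))), ?_⟩
        (Or.inl ⟨p * (k + 1), h, by rw [mul_add]; omega, by rwa [h1], by rw [h1]⟩)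
      simp only [Finset.mem_insert, Finset.mem_erase, not_or, not_and]
      exact ⟨by omega, fun _ => κ.zero_not_mem⟩

/-- The parts on runner `0`. -/
def zparts (p : ℕ) (l : BarPartition) : Finset ℕ := l.parts.filter (p ∣ ·)

theorem zparts_core {p : ℕ} (hp0 : 0 < p) (κ : BarPartition) (hκ : IsBarCore p κ) :
    zparts p κ = ∅ := by
  ext x
  simp only [zparts, Finset.mem_filter, Finset.notMem_empty, iff_false, not_and]
  rintro hx ⟨k, rfl⟩
  exact core_no_mult hp0 κ hκ k hx

theorem zparts_quot {p : ℕ} (l μ : BarPartition) (h : HasSameBarQuotient p l μ) :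
    zparts p l = zparts p μ := by
  ext x
  simp only [zparts, Finset.mem_filter, and_congr_left_iff]
  rintro ⟨k, rfl⟩
  exact h.1 k

theorem charge_removals {p r : ℕ} (hr0 : 1 ≤ r) (hr : 2 * r < p) {l m : BarPartition}
    (h : Relation.ReflTransGen (BarRemoval p) l m) : charge p r l = charge p r m := by
  refine sum_barRemovals (gch p r) ?_ ?_ ?_ h
  · intro a; unfold gch; rw [Nat.add_mod_right]
  · unfold gch; rw [Nat.mod_self, if_neg (by omega), if_neg (by omega)]
  · intro a b hab hne
    rcases Nat.eq_zero_or_pos a with rfl | ha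
    · obtain rfl : b = p := by omega
      unfold gch; rw [Nat.mod_self, Nat.zero_mod, if_neg (by omega), if_neg (by omega)]; rfl
    · rcases Nat.eq_zero_or_pos b with rfl | hb
      · obtain rfl : a = p := by omega
        unfold gch; rw [Nat.mod_self, Nat.zero_mod, if_neg (by omega), if_neg (by omega)]; rfl
      · unfold gch
        rw [Nat.mod_eq_of_lt (by omega : a < p), Nat.mod_eq_of_lt (by omega : b < p)]
        split_ifs <;> omega

theorem two_size {p : ℕ} (hpodd : Odd p) (l : BarPartition) :
    2 * (l.size : ℤ) = ∑ r ∈ Finset.Icc 1 (p / 2), (p * wt p r l +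
      (p * (charge p r l * (charge p r l - 1)) + 2 * r * charge p r l)) +
      2 * ∑ x ∈ zparts p l, (x : ℤ) := by
  have h1 : (l.size : ℤ) = ∑ r ∈ Finset.Icc 1 (p / 2), (p * energy p r l + r * charge p r l) +
      ∑ x ∈ zparts p l, (x : ℤ) := by
    unfold BarPartition.size zparts energy charge
    push_cast
    rw [Finset.sum_congr rfl (fun x _ => part_decomp hpodd x), Finset.sum_add_distrib,
      Finset.sum_comm, Finset.sum_filter]
    congr 1
    refine Finset.sum_congr rfl fun r _ => ?_
    rw [Finset.sum_add_distrib, Finset.mul_sum, Finset.mul_sum]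
  rw [h1, mul_add, Finset.mul_sum]
  congr 1
  refine Finset.sum_congr rfl fun r _ => ?_
  unfold wt; ring

theorem size_add {p : ℕ} (hpodd : Odd p) {l κ μ : BarPartition} (hκ : IsBarCoreOf p l κ)
    (hμ : IsBarCocoreOf p l μ) : (l.size : ℤ) = κ.size + μ.size := by
  have hp0 : 0 < p := hpodd.pos
  have e : 2 * (l.size : ℤ) = 2 * κ.size + 2 * μ.size := by
    rw [two_size hpodd l, two_size hpodd κ, two_size hpodd μ, zparts_core hp0 κ hκ.2,
      zparts_quot l μ hμ.2]
    rw [Finset.sum_empty, mul_zero, add_zero, ← add_assoc, ← Finset.sum_add_distrib]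
    congr 1
    refine Finset.sum_congr rfl fun r hr => ?_
    obtain ⟨hr0, hr1⟩ := Finset.mem_Icc.1 hr
    have hr2 : 2 * r < p := by
      obtain ⟨m, rfl⟩ := hpodd
      omega
    obtain ⟨c, hc⟩ := core_shift hr0 hr2 κ hκ.2
    obtain ⟨d, hd⟩ := hμ.2.2 r hr0 hr2
    have w1 := wt_shift hr0 hr2 _ _ c hc
    have w2 := wt_shift hr0 hr2 _ _ d hd
    have q1 := charge_removals hr0 hr2 hκ.1
    have q2 := charge_removals hr0 hr2 hμ.1
    have q3 : charge p r BarPartition.empty = 0 := rfl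
    have w3 : wt p r BarPartition.empty = 0 := rfl
    rw [w1, w2, w3, ← q1, q2, q3]
    ring
  linarith

/-- The constant in the discriminant, as a function of `|λ| - ℓ(λ)` modulo 4. -/
def c4 (n : ℤ) : ℤ :=
  if n % 4 = 0 then 1 else if n % 4 = 1 then -2 else if n % 4 = 2 then -1 else 2

theorem c4_add_two (n : ℤ) : c4 (n + 2) = - c4 n := by
  unfold c4
  split_ifs <;> omega

theorem c4_sub_two_mul (n : ℤ) (k : ℕ) : c4 (n - 2 * k) = (-1) ^ k * c4 n := by
  induction k with
  | zero => simp
  | succ k ih =>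
    have h := c4_add_two (n - 2 * ((k + 1 : ℕ) : ℤ))
    rw [show n - 2 * ((k + 1 : ℕ) : ℤ) + 2 = n - 2 * k by push_cast; ring, ih] at h
    rw [pow_succ]
    linarith

theorem c4_add (a b : ℤ) (h : a % 2 = 0 ∨ b % 2 = 0) : c4 (a + b) = c4 a * c4 b := by
  unfold c4
  split_ifs <;> omega

theorem c4_not_dvd {p : ℕ} (hp : p.Prime) (hpodd : Odd p) (n : ℤ) : ¬ (p : ℤ) ∣ c4 n := by
  have hp1 := hp.two_le
  have hp2 : p ≠ 2 := by rintro rfl; revert hpodd; decide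
  have hle : ∀ d : ℤ, d ≠ 0 → d.natAbs ≤ 2 → ¬ (p : ℤ) ∣ d := by
    intro d hd h2 hdvd
    have := Nat.le_of_dvd (Int.natAbs_pos.2 hd) (Int.natCast_dvd.1 hdvd)
    omega
  unfold c4
  split_ifs <;> exact hle _ (by decide) (by decide)

theorem length_le_size (l : BarPartition) : l.length ≤ l.size := by
  unfold BarPartition.length BarPartition.size
  rw [Finset.card_eq_sum_ones]
  exact Finset.sum_le_sum fun x hx =>
    Nat.one_le_iff_ne_zero.2 (fun h => l.zero_not_mem (h ▸ hx))

theorem barDisc_eq (l : BarPartition) :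
    barDisc l = c4 ((l.size : ℤ) - l.length) * ∏ a ∈ l.parts, (a : ℤ) := by
  have h := length_le_size l
  unfold barDisc
  rw [← Nat.cast_sub h]
  generalize l.size - l.length = n
  obtain ⟨k, hk⟩ : ∃ k, n = 4 * k + n % 4 := ⟨n / 4, by omega⟩
  have hlt : n % 4 < 4 := Nat.mod_lt _ (by norm_num)
  generalize n % 4 = j at hk hlt
  subst hk
  unfold c4
  interval_cases j
  · rw [if_neg (by omega), if_pos (by omega), show (4 * k + 0) / 2 = 2 * k by omega, pow_mul]
    simp
  · rw [if_pos (by omega), if_neg (by omega), if_pos (by omega),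
      show (4 * k + 1 + 1) / 2 = 2 * k + 1 by omega, pow_succ, pow_mul]
    simp
  · rw [if_neg (by omega), if_neg (by omega), if_neg (by omega), if_pos (by omega),
      show (4 * k + 2) / 2 = 2 * k + 1 by omega, pow_succ, pow_mul]
    simp
  · rw [if_pos (by omega), if_neg (by omega), if_neg (by omega), if_neg (by omega),
      show (4 * k + 3 + 1) / 2 = 2 * (k + 1) by omega, pow_mul]
    simp

/-- Legendre symbol of the representative of `±x` in the lower half system. -/
def hleg (p : ℕ) [Fact p.Prime] (x : ℕ) : ℤ :=
  if x % p = 0 then 1 else if 2 * (x % p) < p then legendreSym p x else legendreSym p (-x)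

/-- Which half system `x` lies in. -/
def hsg (p x : ℕ) : ℤ := if x % p = 0 then 0 else if 2 * (x % p) < p then 1 else -1

theorem legendre_congr (p : ℕ) [Fact p.Prime] {a b : ℤ} (h : (a : ZMod p) = b) :
    legendreSym p a = legendreSym p b := by
  unfold legendreSym; rw [h]

theorem hleg_removals {p : ℕ} [Fact p.Prime] (hpodd : Odd p) {l m : BarPartition}
    (h : Relation.ReflTransGen (BarRemoval p) l m) :
    ∏ x ∈ l.parts, hleg p x = ∏ x ∈ m.parts, hleg p x := by
  have hp : p.Prime := Fact.out
  have hp0 : 0 < p := hp.pos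
  have hself : hleg p p = 1 := by unfold hleg; simp
  have hzero : hleg p 0 = 1 := by unfold hleg; simp
  have main : ∀ a b, 0 < a → 2 * a < p → a + b = p → hleg p a * hleg p b = 1 := by
    intro a b ha h2 hab
    unfold hleg
    rw [Nat.mod_eq_of_lt (by omega : a < p), Nat.mod_eq_of_lt (by omega : b < p),
      if_neg (by omega), if_pos h2, if_neg (by omega), if_neg (by omega)]
    have h3 : ((a : ℕ) : ZMod p) + (b : ℕ) = 0 := by
      rw [← Nat.cast_add, hab, ZMod.natCast_self]
    rw [legendre_congr p (a := (-(b : ℤ))) (b := (a : ℤ))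
      (by push_cast; exact (eq_neg_of_add_eq_zero_left h3).symm), ← sq]
    apply legendreSym.sq_one
    rw [Ne, ZMod.intCast_zmod_eq_zero_iff_dvd]
    intro hd
    have := Nat.le_of_dvd ha (by exact_mod_cast hd)
    omega
  refine prod_barRemovals (hleg p) ?_ hself ?_ h
  · intro a
    unfold hleg
    rw [Nat.add_mod_right, legendre_congr p (a := ((a + p : ℕ) : ℤ)) (b := (a : ℤ)) (by simp),
      legendre_congr p (a := -((a + p : ℕ) : ℤ)) (b := -(a : ℤ)) (by simp)]
  · intro a b hab hne
    rcases Nat.eq_zero_or_pos a with rfl | ha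
    · obtain rfl : b = p := by omega
      rw [hzero, hself, one_mul]
    · rcases Nat.eq_zero_or_pos b with rfl | hb
      · obtain rfl : a = p := by omega
        rw [hzero, hself, one_mul]
      · rcases lt_or_ge (2 * a) p with h2 | h2
        · exact main a b ha h2 hab
        · rw [mul_comm]; exact main b a hb (by omega) (by omega)

theorem hsg_removals {p : ℕ} {l m : BarPartition} (hpodd : Odd p)
    (h : Relation.ReflTransGen (BarRemoval p) l m) :
    ∑ x ∈ l.parts, hsg p x = ∑ x ∈ m.parts, hsg p x := by
  have hp0 : 0 < p := hpodd.pos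
  have hself : hsg p p = 0 := by unfold hsg; simp
  have hzero : hsg p 0 = 0 := by unfold hsg; simp
  refine sum_barRemovals (hsg p) ?_ hself ?_ h
  · intro a
    unfold hsg
    rw [Nat.add_mod_right]
  · intro a b hab hne
    rcases Nat.eq_zero_or_pos a with rfl | ha
    · obtain rfl : b = p := by omega
      rw [hzero, hself, zero_add]
    · rcases Nat.eq_zero_or_pos b with rfl | hb
      · obtain rfl : a = p := by omega
        rw [hzero, hself, zero_add]
      · unfold hsg
        rw [Nat.mod_eq_of_lt (by omega : a < p), Nat.mod_eq_of_lt (by omega : b < p)]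
        obtain ⟨k, rfl⟩ := hpodd
        split_ifs <;> omega

/-- The parts prime to `p`. -/
def nparts (p : ℕ) (l : BarPartition) : Finset ℕ := l.parts.filter (fun x => ¬ p ∣ x)

/-- The parts in the upper half system. -/
def uparts (p : ℕ) (l : BarPartition) : Finset ℕ := l.parts.filter (fun x => p ≤ 2 * (x % p))

theorem length_decomp {p : ℕ} (hp0 : 0 < p) (l : BarPartition) :
    (l.length : ℤ) = (zparts p l).card + ∑ x ∈ l.parts, hsg p x + 2 * (uparts p l).card := by
  unfold BarPartition.length zparts uparts
  rw [Finset.card_eq_sum_ones, Finset.card_filter, Finset.card_filter]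
  push_cast
  rw [Finset.mul_sum, ← Finset.sum_add_distrib, ← Finset.sum_add_distrib]
  refine Finset.sum_congr rfl fun x _ => ?_
  unfold hsg
  simp only [Nat.dvd_iff_mod_eq_zero]
  split_ifs <;> omega

theorem leg_nparts {p : ℕ} [Fact p.Prime] (l : BarPartition) :
    legendreSym p (∏ x ∈ nparts p l, (x : ℤ)) =
      legendreSym p ((-1) ^ (uparts p l).card) * ∏ x ∈ l.parts, hleg p x := by
  have hp0 : 0 < p := (Fact.out : p.Prime).pos
  have hprod : ∀ s : Finset ℕ, legendreSym p (∏ x ∈ s, (x : ℤ)) = ∏ x ∈ s, legendreSym p x :=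
    fun s => map_prod (legendreSym.hom p) _ _
  have hpow : ∀ n : ℕ, legendreSym p ((-1) ^ n) = legendreSym p (-1) ^ n :=
    fun n => map_pow (legendreSym.hom p) _ _
  rw [hprod, hpow]
  unfold nparts uparts
  rw [← Finset.prod_const, Finset.prod_filter, Finset.prod_filter, ← Finset.prod_mul_distrib]
  refine Finset.prod_congr rfl fun x _ => ?_
  unfold hleg
  simp only [Nat.dvd_iff_mod_eq_zero]
  split_ifs
  all_goals first | omega | (rw [← legendreSym.mul, neg_mul_neg, one_mul]) | simp

theorem leg_disc {p : ℕ} [Fact p.Prime] (l : BarPartition) :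
    legendreSym p (c4 ((l.size : ℤ) - l.length) * ∏ x ∈ nparts p l, (x : ℤ)) =
      legendreSym p (c4 ((l.size : ℤ) - (zparts p l).card - ∑ x ∈ l.parts, hsg p x)) *
        ∏ x ∈ l.parts, hleg p x := by
  have hp0 : 0 < p := (Fact.out : p.Prime).pos
  rw [legendreSym.mul, leg_nparts, length_decomp hp0 l,
    show (l.size : ℤ) - ((zparts p l).card + ∑ x ∈ l.parts, hsg p x + 2 * (uparts p l).card) =
      ((l.size : ℤ) - (zparts p l).card - ∑ x ∈ l.parts, hsg p x) - 2 * (uparts p l).card by ring,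
    c4_sub_two_mul, legendreSym.mul]
  have : legendreSym p ((-1) ^ (uparts p l).card) * legendreSym p ((-1) ^ (uparts p l).card) = 1 := by
    rw [← legendreSym.mul, ← mul_pow]; simp
  linear_combination (legendreSym p (c4 ((l.size : ℤ) - (zparts p l).card -
    ∑ x ∈ l.parts, hsg p x)) * ∏ x ∈ l.parts, hleg p x) * this

theorem sgn_even {p : ℕ} (hp0 : 0 < p) (l : BarPartition) (h : l.sgn = 1) :
    ((l.size : ℤ) - (zparts p l).card - ∑ x ∈ l.parts, hsg p x) % 2 = 0 := by
  have h1 := length_decomp hp0 l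
  have h2 := length_le_size l
  have h3 : Even (l.size - l.length) := by
    by_contra hne
    rw [BarPartition.sgn, (Nat.not_even_iff_odd.1 hne).neg_one_pow] at h
    exact absurd h (by decide)
  obtain ⟨k, hk⟩ := h3
  omega

theorem nparts_not_dvd {p : ℕ} (hp : p.Prime) (l : BarPartition) :
    ¬ (p : ℤ) ∣ ∏ x ∈ nparts p l, (x : ℤ) := by
  rw [Prime.dvd_finsetProd_iff (Nat.prime_iff_prime_int.1 hp)]
  rintro ⟨x, hx, hd⟩
  exact (Finset.mem_filter.1 hx).2 (by exact_mod_cast hd)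

theorem barDisc_split (p : ℕ) (l : BarPartition) :
    barDisc l = c4 ((l.size : ℤ) - l.length) * (∏ x ∈ nparts p l, (x : ℤ)) *
      ∏ x ∈ zparts p l, (x : ℤ) := by
  rw [barDisc_eq, mul_assoc, mul_comm (∏ x ∈ nparts p l, (x : ℤ))]
  unfold nparts zparts
  rw [Finset.prod_filter_mul_prod_filter_not]

/-- Let `p` be an odd prime, `λ` a bar-partition with `p`-bar core `κ` and
`p`-bar cocore `μ`, and `σ` a `σ_p`-type automorphism of `ℚ̄`. If `sgn(κ) = 1` or
`sgn(μ) = 1`, then `τ(λ,σ) = τ(κ,σ)·τ(μ,σ)`. -/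
theorem tau_barLittlewood_of_sgn_pos (p : ℕ) (hp : p.Prime) (hpodd : Odd p)
    (l κ μ : BarPartition) (hκ : IsBarCoreOf p l κ) (hμ : IsBarCocoreOf p l μ)
    (σ : Qbar ≃ₐ[ℚ] Qbar) (hσ : IsSigmaPType p σ)
    (τl τκ τμ : ℤ)
    (hτl : ∀ α : Qbar, α ^ 2 = (barDisc l : Qbar) → σ α = (τl : Qbar) * α)
    (hτκ : ∀ α : Qbar, α ^ 2 = (barDisc κ : Qbar) → σ α = (τκ : Qbar) * α)
    (hτμ : ∀ α : Qbar, α ^ 2 = (barDisc μ : Qbar) → σ α = (τμ : Qbar) * α)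
    (hsgn : κ.sgn = 1 ∨ μ.sgn = 1) :
    τl = τκ * τμ := by
  have : Fact p.Prime := ⟨hp⟩
  have hp0 : 0 < p := hp.pos
  have hpi : Prime (p : ℤ) := Nat.prime_iff_prime_int.1 hp
  set El : ℤ := c4 ((l.size : ℤ) - l.length) * ∏ x ∈ nparts p l, (x : ℤ) with hEl
  set Eκ : ℤ := c4 ((κ.size : ℤ) - κ.length) * ∏ x ∈ nparts p κ, (x : ℤ) with hEκ
  set Eμ : ℤ := c4 ((μ.size : ℤ) - μ.length) * ∏ x ∈ nparts p μ, (x : ℤ) with hEμ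
  set P : ℤ := ∏ x ∈ zparts p l, (x : ℤ) with hP
  have hDl : barDisc l = El * P := barDisc_split p l
  have hDκ : barDisc κ = Eκ := by
    rw [barDisc_split p κ, zparts_core hp0 κ hκ.2, Finset.prod_empty, mul_one]
  have hDμ : barDisc μ = Eμ * P := by
    rw [barDisc_split p μ, ← zparts_quot l μ hμ.2]
  have hP0 : P ≠ 0 := by
    rw [hP, Finset.prod_ne_zero_iff]
    intro x hx
    have := (Finset.mem_filter.1 hx).1
    exact Nat.cast_ne_zero.2 (fun h => l.zero_not_mem (h ▸ this))
  have hnd : ∀ n : BarPartition,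
      ¬ (p : ℤ) ∣ c4 ((n.size : ℤ) - n.length) * ∏ x ∈ nparts p n, (x : ℤ) := by
    intro n h
    rcases hpi.dvd_or_dvd h with h | h
    · exact c4_not_dvd hp hpodd _ h
    · exact nparts_not_dvd hp n h
  have hndE : ¬ (p : ℤ) ∣ El * Eκ * Eμ := by
    intro h
    rcases hpi.dvd_or_dvd h with h | h
    · rcases hpi.dvd_or_dvd h with h | h
      · exact hnd l h
      · exact hnd κ h
    · exact hnd μ h
  -- the Legendre symbol of the triple product is one
  have hH1 := hleg_removals hpodd hκ.1
  have hH2 := hleg_removals hpodd hμ.1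
  have hS1 := hsg_removals hpodd hκ.1
  have hS2 := hsg_removals hpodd hμ.1
  have hH3 : ∏ x ∈ BarPartition.empty.parts, hleg p x = 1 := rfl
  have hS3 : ∑ x ∈ BarPartition.empty.parts, hsg p x = 0 := rfl
  have hxk : (zparts p κ).card = 0 := by rw [zparts_core hp0 κ hκ.2]; rfl
  have hpar := hsgn.imp (sgn_even hp0 κ) (sgn_even hp0 μ)
  have hc := c4_add _ _ hpar
  have hsum : ((κ.size : ℤ) - (zparts p κ).card - ∑ x ∈ κ.parts, hsg p x) +
      ((μ.size : ℤ) - (zparts p μ).card - ∑ x ∈ μ.parts, hsg p x) =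
      (l.size : ℤ) - (zparts p l).card - ∑ x ∈ l.parts, hsg p x := by
    rw [size_add hpodd hκ hμ, hxk, hS2, hS3, hS1, zparts_quot l μ hμ.2]
    push_cast; ring
  have hleg1 : legendreSym p (El * Eκ * Eμ) = 1 := by
    have hL : legendreSym p (El * Eκ * Eμ) =
        legendreSym p El * (legendreSym p Eκ * legendreSym p Eμ) := by
      rw [legendreSym.mul, legendreSym.mul, mul_assoc]
    have hE : legendreSym p El = legendreSym p Eκ * legendreSym p Eμ := by
      rw [hEl, hEκ, hEμ, leg_disc, leg_disc, leg_disc, ← hsum, hc, legendreSym.mul, hH2, hH3, hH1]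
      ring
    rw [hL, ← hE, ← sq]
    apply legendreSym.sq_one
    rw [Ne, ZMod.intCast_zmod_eq_zero_iff_dvd]
    exact hnd l
  obtain ⟨a, ha⟩ := IsAlgClosed.exists_pow_nat_eq (barDisc l : Qbar) (n := 2) (by norm_num)
  obtain ⟨b, hb⟩ := IsAlgClosed.exists_pow_nat_eq (barDisc κ : Qbar) (n := 2) (by norm_num)
  obtain ⟨c, hc'⟩ := IsAlgClosed.exists_pow_nat_eq (barDisc μ : Qbar) (n := 2) (by norm_num)
  have hPQ : (P : Qbar) ≠ 0 := Int.cast_ne_zero.2 hP0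
  have hsq : (a * b * c / P) ^ 2 = ((El * Eκ * Eμ : ℤ) : Qbar) := by
    rw [div_pow, mul_pow, mul_pow, ha, hb, hc', hDl, hDκ, hDμ]
    push_cast
    field_simp
  have h1 := sigma_sqrt hpodd hσ _ hndE _ hsq
  rw [hleg1, map_div₀, map_mul, map_mul, map_intCast, hτl a ha, hτκ b hb, hτμ c hc'] at h1
  have hne : a * b * c / (P : Qbar) ≠ 0 := by
    intro h0
    rw [h0] at hsq
    have : ((El * Eκ * Eμ : ℤ) : Qbar) ≠ 0 :=
      Int.cast_ne_zero.2 (fun h => hndE (h ▸ dvd_zero _))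
    exact this (by rw [← hsq]; simp)
  have h2 : ((τl : Qbar) * (τκ * τμ)) = 1 := by
    apply mul_right_cancel₀ hne
    push_cast at h1
    rw [← h1]; ring
  have h3 : τl * (τκ * τμ) = 1 := by exact_mod_cast h2
  exact Int.eq_of_mul_eq_one h3
end

section
/- Let p be an odd prime, let λ be a bar-partition with p-bar core λ_(p̄) and p-bar cocore λ^[p̄], and let σ be an automorphism of ℚ̄ over ℚ that fixes every root of unity whose order is coprime to p. Then τ(λ,σ) = τ(λ_(p̄),σ)·τ(λ^[p̄],σ). -/
open scoped BigOperators

/-- `σ` fixes some square root of the integer `D`. -/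
def FixesSqrt (σ : Qbar ≃ₐ[ℚ] Qbar) (D : ℤ) : Prop :=
  ∃ δ : Qbar, δ ^ 2 = (D : Qbar) ∧ σ δ = δ

theorem FixesSqrt.one (σ : Qbar ≃ₐ[ℚ] Qbar) : FixesSqrt σ 1 := ⟨1, by simp, by simp⟩

theorem FixesSqrt.mul {σ : Qbar ≃ₐ[ℚ] Qbar} {a b : ℤ} (ha : FixesSqrt σ a)
    (hb : FixesSqrt σ b) : FixesSqrt σ (a * b) := by
  obtain ⟨x, hx, hx'⟩ := ha
  obtain ⟨y, hy, hy'⟩ := hb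
  exact ⟨x * y, by rw [mul_pow, hx, hy]; push_cast; rfl, by rw [map_mul, hx', hy']⟩

theorem FixesSqrt.pow {σ : Qbar ≃ₐ[ℚ] Qbar} {a : ℤ} (ha : FixesSqrt σ a) (n : ℕ) :
    FixesSqrt σ (a ^ n) := by
  induction n with
  | zero => simpa using FixesSqrt.one σ
  | succ k ih => rw [pow_succ]; exact ih.mul ha

theorem FixesSqrt.prod {σ : Qbar ≃ₐ[ℚ] Qbar} (s : Finset ℕ)
    (h : ∀ a ∈ s, FixesSqrt σ (a : ℤ)) : FixesSqrt σ (∏ a ∈ s, (a : ℤ)) :=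
  Finset.prod_induction _ (FixesSqrt σ) (fun _ _ ha hb => ha.mul hb) (FixesSqrt.one σ) h

theorem two_pow_coprime_of_odd {p : ℕ} (hpodd : Odd p) (k : ℕ) : Nat.Coprime (2 ^ k) p :=
  Nat.Coprime.pow_left _ (Nat.coprime_two_left.2 hpodd)

theorem fixesSqrt_neg_one {p : ℕ} (hpodd : Odd p) {σ : Qbar ≃ₐ[ℚ] Qbar}
    (hσ : ∀ (ζ : Qbar) (n : ℕ), 0 < n → Nat.Coprime n p → ζ ^ n = 1 → σ ζ = ζ) :
    FixesSqrt σ (-1) := by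
  obtain ⟨z, hz⟩ := IsAlgClosed.exists_pow_nat_eq (-1 : Qbar) (n := 2) (by norm_num)
  refine ⟨z, by simpa using hz, hσ z (2 ^ 2) (by norm_num) (two_pow_coprime_of_odd hpodd 2) ?_⟩
  have : z ^ (2 ^ 2) = (z ^ 2) ^ 2 := by ring
  rw [this, hz]; norm_num

theorem fixesSqrt_two {p : ℕ} (hpodd : Odd p) {σ : Qbar ≃ₐ[ℚ] Qbar}
    (hσ : ∀ (ζ : Qbar) (n : ℕ), 0 < n → Nat.Coprime n p → ζ ^ n = 1 → σ ζ = ζ) :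
    FixesSqrt σ 2 := by
  obtain ⟨z, hz⟩ := IsAlgClosed.exists_pow_nat_eq (-1 : Qbar) (n := 4) (by norm_num)
  have h8 : z ^ (2 ^ 3) = 1 := by
    have : z ^ (2 ^ 3) = (z ^ 4) ^ 2 := by ring
    rw [this, hz]; norm_num
  have hs := hσ z (2 ^ 3) (by norm_num) (two_pow_coprime_of_odd hpodd 3) h8
  refine ⟨z - z ^ 3, ?_, by rw [map_sub, map_pow, hs]⟩
  push_cast
  linear_combination (z ^ 2 - 2) * hz

theorem fixesSqrt_prime {p : ℕ} (hp : p.Prime) (hpodd : Odd p) {σ : Qbar ≃ₐ[ℚ] Qbar}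
    (hσ : ∀ (ζ : Qbar) (n : ℕ), 0 < n → Nat.Coprime n p → ζ ^ n = 1 → σ ζ = ζ)
    (q : ℕ) (hq : q.Prime) (hqp : q ≠ p) : FixesSqrt σ q := by
  by_cases hq2 : q = 2
  · subst hq2; exact fixesSqrt_two hpodd hσ
  have : Fact q.Prime := ⟨hq⟩
  have hcop : Nat.Coprime q p := (Nat.coprime_primes hq hp).2 hqp
  have : NeZero (q : Qbar) := ⟨by exact_mod_cast hq.ne_zero⟩
  obtain ⟨ζ, hζ⟩ := HasEnoughRootsOfUnity.exists_primitiveRoot Qbar q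
  let ψ := AddChar.zmodChar q hζ.pow_eq_one
  have hψ : ψ.IsPrimitive := AddChar.zmodChar_primitive_of_primitive_root q hζ
  let χ := (quadraticChar (ZMod q)).ringHomComp (Int.castRingHom Qbar)
  have hF : ringChar (ZMod q) ≠ 2 := by rwa [ZMod.ringChar_zmod_n]
  have hχ1 : χ ≠ 1 := by
    have := quadraticChar_ne_one hF
    exact (MulChar.ringHomComp_ne_one_iff (Int.cast_injective)).2 this
  have hχ2 : χ.IsQuadratic := (quadraticChar_isQuadratic (ZMod q)).comp _
  have hg := gaussSum_sq hχ1 hχ2 hψ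
  have hfix : σ (gaussSum χ ψ) = gaussSum χ ψ := by
    unfold gaussSum
    rw [map_sum]
    refine Finset.sum_congr rfl fun x _ => ?_
    rw [map_mul]
    congr 1
    · simp [χ]
    · refine hσ _ q hq.pos hcop ?_
      rw [← AddChar.map_nsmul_eq_pow]
      simp
  have h1 : FixesSqrt σ (quadraticChar (ZMod q) (-1) * q) :=
    ⟨gaussSum χ ψ, by rw [hg]; simp [χ], hfix⟩
  rcases quadraticChar_dichotomy (F := ZMod q) (a := -1) (by simp) with h | h
  · rw [h] at h1; simpa using h1
  · rw [h] at h1; simpa using (fixesSqrt_neg_one hpodd hσ).mul h1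

theorem fixesSqrt_nat {p : ℕ} (hp : p.Prime) (hpodd : Odd p) {σ : Qbar ≃ₐ[ℚ] Qbar}
    (hσ : ∀ (ζ : Qbar) (n : ℕ), 0 < n → Nat.Coprime n p → ζ ^ n = 1 → σ ζ = ζ)
    (n : ℕ) (hn : ¬ p ∣ n) : FixesSqrt σ n := by
  induction n using Nat.recOnMul with
  | zero => simp at hn
  | one => simpa using FixesSqrt.one σ
  | prime q hq =>
    exact fixesSqrt_prime hp hpodd hσ q hq (fun h => hn (by rw [h]))
  | mul a b ha hb =>
    push_cast
    exact (ha fun h => hn (h.mul_right b)).mul (hb fun h => hn (h.mul_left a))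

/-- The discriminant up to factors whose square roots are fixed by `σ`. -/
theorem barDisc_eq_fixed_mul {p : ℕ} (hp : p.Prime) (hpodd : Odd p) {σ : Qbar ≃ₐ[ℚ] Qbar}
    (hσ : ∀ (ζ : Qbar) (n : ℕ), 0 < n → Nat.Coprime n p → ζ ^ n = 1 → σ ζ = ζ)
    (l : BarPartition) : ∃ g : ℤ, g ≠ 0 ∧ FixesSqrt σ g ∧
      barDisc l = g * ∏ a ∈ l.parts with p ∣ a, (a : ℤ) := by
  have hs : ∃ s : ℤ, s ≠ 0 ∧ FixesSqrt σ s ∧ barDisc l = s * ∏ a ∈ l.parts, (a : ℤ) := by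
    unfold barDisc
    split_ifs
    · exact ⟨_, by simp, (fixesSqrt_two hpodd hσ).mul ((fixesSqrt_neg_one hpodd hσ).pow _), rfl⟩
    · exact ⟨_, by simp, (fixesSqrt_neg_one hpodd hσ).pow _, rfl⟩
  obtain ⟨s, hs0, hs, hd⟩ := hs
  refine ⟨s * ∏ a ∈ l.parts with ¬ p ∣ a, (a : ℤ), mul_ne_zero hs0 ?_, hs.mul ?_, ?_⟩
  · refine Finset.prod_ne_zero_iff.2 fun a ha h0 => ?_
    rw [Finset.mem_filter] at ha
    exact ha.2 (by rw [Int.natCast_eq_zero.1 h0]; exact dvd_zero p)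
  · exact FixesSqrt.prod _ fun a ha =>
      fixesSqrt_nat hp hpodd hσ a (Finset.mem_filter.1 ha).2
  · rw [hd, ← Finset.prod_filter_mul_prod_filter_not l.parts (p ∣ ·)]; ring

/-- A `t`-bar core has no part divisible by `t`. -/
theorem IsBarCore.not_dvd {t : ℕ} (ht : 0 < t) {κ : BarPartition} (h : IsBarCore t κ) (k : ℕ) :
    t * k ∉ κ.parts := by
  induction k with
  | zero => simpa using κ.zero_not_mem
  | succ k ih =>
    intro hk
    rcases Nat.eq_zero_or_pos k with rfl | hk0
    · have hk' : t ∈ κ.parts := by simpa using hk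
      exact h ⟨κ.parts.erase t, fun h0 => κ.zero_not_mem (Finset.mem_of_mem_erase h0)⟩
        (Or.inr (Or.inl ⟨hk', rfl⟩))
    · have hsub : t * (k + 1) - t = t * k := by rw [Nat.mul_succ]; omega
      have hpos : 0 < t * k := Nat.mul_pos ht hk0
      refine h ⟨insert (t * (k + 1) - t) (κ.parts.erase (t * (k + 1))), fun h0 => ?_⟩
        (Or.inl ⟨_, hk, ?_, by rwa [hsub], rfl⟩)
      · rcases Finset.mem_insert.1 h0 with h0 | h0
        · omega
        · exact κ.zero_not_mem (Finset.mem_of_mem_erase h0)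
      · rw [Nat.mul_succ]; omega

/-- Let `p` be an odd prime, `λ` a bar-partition with `p`-bar core `κ` and
`p`-bar cocore `μ`, and let `σ` be an automorphism of `ℚ̄` over `ℚ` fixing every root of
unity of order coprime to `p`. Then `τ(λ,σ) = τ(κ,σ)·τ(μ,σ)`. -/
theorem tau_barLittlewood_of_fixes_pprime_roots (p : ℕ) (hp : p.Prime) (hpodd : Odd p)
    (l κ μ : BarPartition) (hκ : IsBarCoreOf p l κ) (hμ : IsBarCocoreOf p l μ)
    (σ : Qbar ≃ₐ[ℚ] Qbar)
    (hσ : ∀ (ζ : Qbar) (n : ℕ), 0 < n → Nat.Coprime n p → ζ ^ n = 1 → σ ζ = ζ)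
    (τl τκ τμ : ℤ)
    (hτl : ∀ α : Qbar, α ^ 2 = (barDisc l : Qbar) → σ α = (τl : Qbar) * α)
    (hτκ : ∀ α : Qbar, α ^ 2 = (barDisc κ : Qbar) → σ α = (τκ : Qbar) * α)
    (hτμ : ∀ α : Qbar, α ^ 2 = (barDisc μ : Qbar) → σ α = (τμ : Qbar) * α) :
    τl = τκ * τμ := by
  obtain ⟨gl, gl0, ⟨dl, hdl, hdl'⟩, hl⟩ := barDisc_eq_fixed_mul hp hpodd hσ l
  obtain ⟨gκ, gκ0, ⟨dκ, hdκ, hdκ'⟩, hk⟩ := barDisc_eq_fixed_mul hp hpodd hσ κ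
  obtain ⟨gμ, gμ0, ⟨dμ, hdμ, hdμ'⟩, hm⟩ := barDisc_eq_fixed_mul hp hpodd hσ μ
  have ne_of_sq : ∀ {d : Qbar} {g : ℤ}, g ≠ 0 → d ^ 2 = (g : Qbar) → d ≠ 0 := by
    rintro d g hg hd rfl
    apply hg
    have : (g : Qbar) = 0 := by rw [← hd]; simp
    exact_mod_cast this
  have hfκ : κ.parts.filter (p ∣ ·) = ∅ := by
    refine Finset.filter_eq_empty_iff.2 ?_
    rintro a ha ⟨k, rfl⟩
    exact hκ.2.not_dvd hp.pos k ha
  have hfμ : μ.parts.filter (p ∣ ·) = l.parts.filter (p ∣ ·) := by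
    ext a
    simp only [Finset.mem_filter]
    refine and_congr_left ?_
    rintro ⟨k, rfl⟩
    exact (hμ.2.1 k).symm
  rw [hfκ, Finset.prod_empty, mul_one] at hk
  rw [hfμ] at hm
  have hQ0 : (∏ a ∈ l.parts with p ∣ a, (a : ℤ)) ≠ 0 := by
    refine Finset.prod_ne_zero_iff.2 fun a ha h0 => ?_
    rw [Int.natCast_eq_zero.1 h0] at ha
    exact l.zero_not_mem (Finset.mem_filter.1 ha).1
  generalize (∏ a ∈ l.parts with p ∣ a, (a : ℤ)) = Q at hl hm hQ0
  obtain ⟨q, hq⟩ := IsAlgClosed.exists_pow_nat_eq (Q : Qbar) (n := 2) (by norm_num)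
  have hq0 := ne_of_sq hQ0 hq
  have hdl0 := ne_of_sq gl0 hdl
  have hdκ0 := ne_of_sq gκ0 hdκ
  have hdμ0 := ne_of_sq gμ0 hdμ
  have el := hτl (dl * q) (by rw [mul_pow, hdl, hq, hl]; push_cast; rfl)
  have em := hτμ (dμ * q) (by rw [mul_pow, hdμ, hq, hm]; push_cast; rfl)
  have ek := hτκ dκ (by rw [hdκ, hk])
  rw [map_mul, hdl', mul_left_comm] at el
  rw [map_mul, hdμ', mul_left_comm] at em
  rw [hdκ'] at ek
  have el' := mul_left_cancel₀ hdl0 el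
  have em' := mul_left_cancel₀ hdμ0 em
  have e1 : (τl : Qbar) = τμ := mul_right_cancel₀ hq0 (el'.symm.trans em')
  have e2 : (τκ : Qbar) = 1 := mul_right_cancel₀ hdκ0 (by rw [← ek, one_mul])
  have e1' : τl = τμ := by exact_mod_cast e1
  have e2' : τκ = 1 := by exact_mod_cast e2
  rw [e1', e2', one_mul]
end

section
/- Let t ≥ 3 be an odd integer. For every bar-partition λ, the integer ℓ(λ) − ℓ(λ_(t̄)) − ℓ(λ^[t̄]) is even, where λ_(t̄) is the t-bar core and λ^[t̄] the t-bar cocore of λ. -/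
open scoped BigOperators

/-- The number of parts not divisible by `t`. -/
def nonMultCount (t : ℕ) (l : BarPartition) : ℕ := (l.parts.filter (fun a => ¬ t ∣ a)).card

/-- A removal step preserves the parity of the number of parts prime to runner `0`. -/
theorem nonMultCount_step (t : ℕ) (μ ν : BarPartition) (h : BarRemoval t μ ν) :
    nonMultCount t μ % 2 = nonMultCount t ν % 2 := by
  unfold nonMultCount
  rcases h with ⟨a, ha, hlt, hna, hν⟩ | ⟨ha, hν⟩ | ⟨a, ha, b, hb, hab, hsum, hν⟩
  · rw [hν, Finset.filter_insert, Finset.filter_erase]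
    have hd : t ∣ a - t ↔ t ∣ a := Nat.dvd_sub_self_right.trans
      ⟨fun h => h.resolve_right (by omega), Or.inl⟩
    by_cases hta : t ∣ a
    · rw [if_neg (by simp [hd, hta]), Finset.erase_eq_of_notMem (by simp [hta])]
    · rw [if_pos (by rwa [hd]), Finset.card_insert_of_notMem (by simp [hna]),
        Finset.card_erase_add_one (by simp [ha, hta])]
  · rw [hν, Finset.filter_erase, Finset.erase_eq_of_notMem (by simp)]
  · have ha0 : a ≠ 0 := fun h => μ.zero_not_mem (h ▸ ha)
    have hb0 : b ≠ 0 := fun h => μ.zero_not_mem (h ▸ hb)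
    have hta : ¬ t ∣ a := fun h => by
      have := Nat.le_of_dvd (by omega) h
      omega
    have htb : ¬ t ∣ b := fun h => by
      have := Nat.le_of_dvd (by omega) h
      omega
    rw [hν, Finset.filter_erase, Finset.filter_erase]
    have h1 := Finset.card_erase_add_one
      (s := μ.parts.filter (fun a => ¬ t ∣ a)) (a := a) (by simp [ha, hta])
    have h2 := Finset.card_erase_add_one
      (s := (μ.parts.filter (fun a => ¬ t ∣ a)).erase a) (a := b)
      (by simp [hb, htb, hab.symm])
    omega

theorem nonMultCount_chain (t : ℕ) (μ ν : BarPartition)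
    (h : Relation.ReflTransGen (BarRemoval t) μ ν) :
    nonMultCount t μ % 2 = nonMultCount t ν % 2 := by
  induction h with
  | refl => rfl
  | tail _ h ih => exact ih.trans (nonMultCount_step t _ _ h)

/-- A bar core has no part divisible by `t`. -/
theorem core_no_mult_s4 (t : ℕ) (ht : 0 < t) (κ : BarPartition) (h : IsBarCore t κ) (a : ℕ)
    (hd : t ∣ a) : a ∉ κ.parts := by
  induction a using Nat.strong_induction_on with
  | _ a ih =>
    intro ha
    have ha0 : a ≠ 0 := fun h => κ.zero_not_mem (h ▸ ha)
    have hle := Nat.le_of_dvd (by omega) hd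
    rcases hle.eq_or_lt with rfl | hlt
    · refine h ⟨κ.parts.erase t, ?_⟩ (Or.inr (Or.inl ⟨ha, rfl⟩))
      simp [κ.zero_not_mem]
    · refine h ⟨insert (a - t) (κ.parts.erase a), ?_⟩ (Or.inl ⟨a, ha, hlt, ?_, rfl⟩)
      · simp only [Finset.mem_insert, Finset.mem_erase, not_or]
        exact ⟨by omega, fun h => κ.zero_not_mem h.2⟩
      · exact ih (a - t) (by omega) (Nat.dvd_sub hd dvd_rfl)

/-- Let `t ≥ 3` be odd. For every bar-partition `λ` with `t`-bar core `κ`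
and `t`-bar cocore `μ`, the integer `ℓ(λ) − ℓ(κ) − ℓ(μ)` is even. -/
theorem length_sub_barCore_sub_barCocore_even (t : ℕ) (ht : 3 ≤ t) (htodd : Odd t)
    (l κ μ : BarPartition) (hκ : IsBarCoreOf t l κ) (hμ : IsBarCocoreOf t l μ) :
    Even ((l.length : ℤ) - κ.length - μ.length) := by
  have split : ∀ m : BarPartition,
      (m.parts.filter (fun a => t ∣ a)).card + nonMultCount t m = m.length := fun m =>
    Finset.card_filter_add_card_filter_not _
  have h1 := nonMultCount_chain t _ _ hκ.1
  have h2 := nonMultCount_chain t _ _ hμ.1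
  have h0 : nonMultCount t BarPartition.empty = 0 := by
    simp [nonMultCount, BarPartition.empty]
  have h3 : (κ.parts.filter (fun a => t ∣ a)).card = 0 := by
    rw [Finset.card_eq_zero, Finset.filter_eq_empty_iff]
    intro a ha hd
    exact core_no_mult_s4 t (by omega) κ hκ.2 a hd ha
  have h4 : l.parts.filter (fun a => t ∣ a) = μ.parts.filter (fun a => t ∣ a) := by
    ext a
    simp only [Finset.mem_filter]
    constructor
    · rintro ⟨ha, k, rfl⟩
      exact ⟨(hμ.2.1 k).1 ha, Dvd.intro k rfl⟩
    · rintro ⟨ha, k, rfl⟩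
      exact ⟨(hμ.2.1 k).2 ha, Dvd.intro k rfl⟩
  have s1 := split l
  have s2 := split κ
  have s3 := split μ
  rw [h4] at s1
  rw [Int.even_iff]
  omega
end

section
/- Let t ≥ 3 be an odd integer. For every bar-partition λ there exists an integer d ≥ 0 such that ℓ(λ) = ℓ(λ_(t̄)) + ℓ(λ^[t̄]) − 2d; in particular ℓ(λ) ≤ ℓ(λ_(t̄)) + ℓ(λ^[t̄]) and the difference is even. -/
open scoped BigOperators

/-- number of parts congruent to `r` mod `t` -/
def runnerCount (t r : ℕ) (l : BarPartition) : ℕ := (l.parts.filter (fun a => a % t = r)).card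

/-- weight of a part for the charge of the pair of runners `r`, `t - r` -/
def gw (t r a : ℕ) : ℤ := (if a % t = r then 1 else 0) - (if a % t = t - r then 1 else 0)

theorem sum_gw (t r : ℕ) (l : BarPartition) :
    ∑ a ∈ l.parts, gw t r a = (runnerCount t r l : ℤ) - runnerCount t (t - r) l := by
  simp [gw, runnerCount, Finset.sum_sub_distrib]

theorem sum_gw_step (t r : ℕ) (hr : 1 ≤ r) (hrt : 2 * r < t) (l m : BarPartition)
    (h : BarRemoval t l m) : ∑ a ∈ m.parts, gw t r a = ∑ a ∈ l.parts, gw t r a := by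
  rcases h with ⟨a, ha, hta, hn, hm⟩ | ⟨ha, hm⟩ | ⟨a, ha, b, hb, hab, hs, hm⟩
  · have h1 := Finset.add_sum_erase l.parts (gw t r) ha
    have h2 : a - t ∉ l.parts.erase a := fun h => hn (Finset.mem_of_mem_erase h)
    have h3 : gw t r (a - t) = gw t r a := by
      have : (a - t) % t = a % t := (Nat.mod_eq_sub_mod hta.le).symm
      simp [gw, this]
    rw [hm, Finset.sum_insert h2, h3, h1]
  · have h1 := Finset.add_sum_erase l.parts (gw t r) ha
    have h3 : gw t r t = 0 := by
      have h4 : ¬ 0 = r := by omega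
      have h5 : ¬ 0 = t - r := by omega
      simp [gw, h4, h5]
    rw [hm, ← h1, h3, zero_add]
  · have h1 := Finset.add_sum_erase l.parts (gw t r) ha
    have h2 := Finset.add_sum_erase (l.parts.erase a) (gw t r)
      (Finset.mem_erase.2 ⟨hab.symm, hb⟩)
    have ha0 : a ≠ 0 := fun h => l.zero_not_mem (h ▸ ha)
    have hb0 : b ≠ 0 := fun h => l.zero_not_mem (h ▸ hb)
    have h3 : gw t r a + gw t r b = 0 := by
      have e1 : a % t = a := Nat.mod_eq_of_lt (by omega)
      have e2 : b % t = b := Nat.mod_eq_of_lt (by omega)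
      simp only [gw, e1, e2]
      split_ifs <;> omega
    rw [hm]
    linarith

theorem sum_gw_star (t r : ℕ) (hr : 1 ≤ r) (hrt : 2 * r < t) (l m : BarPartition)
    (h : Relation.ReflTransGen (BarRemoval t) l m) :
    ∑ a ∈ m.parts, gw t r a = ∑ a ∈ l.parts, gw t r a := by
  induction h with
  | refl => rfl
  | tail _ h ih => rw [sum_gw_step t r hr hrt _ _ h, ih]

theorem core_mod (t : ℕ) (ht : 3 ≤ t) (κ : BarPartition) (h : IsBarCore t κ) :
    ∀ a, a ∈ κ.parts → a % t ≠ 0 ∧ a % t ∈ κ.parts := by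
  have htn : t ∉ κ.parts := fun hh =>
    h ⟨κ.parts.erase t, fun h0 => κ.zero_not_mem (Finset.mem_of_mem_erase h0)⟩ (Or.inr (Or.inl ⟨hh, rfl⟩))
  intro a
  induction a using Nat.strong_induction_on with
  | _ a ih =>
    intro ha
    have ha0 : a ≠ 0 := fun h => κ.zero_not_mem (h ▸ ha)
    rcases lt_trichotomy a t with hlt | heq | hgt
    · rw [Nat.mod_eq_of_lt hlt]; exact ⟨ha0, ha⟩
    · exact absurd (heq ▸ ha) htn
    · have h1 : a - t ∈ κ.parts := by
        by_contra hn
        refine h ⟨insert (a - t) (κ.parts.erase a), ?_⟩ (Or.inl ⟨a, ha, hgt, hn, rfl⟩)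
        intro h0
        rcases Finset.mem_insert.1 h0 with h0 | h0
        · omega
        · exact κ.zero_not_mem (Finset.mem_of_mem_erase h0)
      have := ih (a - t) (by omega) h1
      rwa [← Nat.mod_eq_sub_mod hgt.le] at this

theorem core_zero (t : ℕ) (ht : 3 ≤ t) (κ : BarPartition) (h : IsBarCore t κ) :
    runnerCount t 0 κ = 0 := by
  rw [runnerCount, Finset.card_eq_zero, Finset.filter_eq_empty_iff]
  exact fun a ha => (core_mod t ht κ h a ha).1

theorem core_pair (t r : ℕ) (ht : 3 ≤ t) (hr : 1 ≤ r) (hrt : 2 * r < t) (κ : BarPartition)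
    (h : IsBarCore t κ) : runnerCount t r κ = 0 ∨ runnerCount t (t - r) κ = 0 := by
  by_contra! hc
  obtain ⟨h1, h2⟩ := hc
  obtain ⟨a, ha⟩ := Finset.card_ne_zero.1 h1
  obtain ⟨b, hb⟩ := Finset.card_ne_zero.1 h2
  rw [Finset.mem_filter] at ha hb
  have h3 := (core_mod t ht κ h a ha.1).2
  have h4 := (core_mod t ht κ h b hb.1).2
  rw [ha.2] at h3
  rw [hb.2] at h4
  refine h ⟨(κ.parts.erase r).erase (t - r), fun h0 => κ.zero_not_mem
    (Finset.mem_of_mem_erase (Finset.mem_of_mem_erase h0))⟩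
    (Or.inr (Or.inr ⟨r, h3, t - r, h4, by omega, by omega, rfl⟩))

/-- number of parts on a runner through slots -/
theorem runnerCount_slots (t r M : ℕ) (hr : r < t) (l : BarPartition)
    (hM : ∀ a ∈ l.parts, a < M) :
    runnerCount t r l = ((Finset.range M).filter (fun i => t * i + r ∈ l.parts)).card := by
  symm
  apply Finset.card_bij (fun i _ => t * i + r)
  · intro i hi
    rw [Finset.mem_filter] at hi ⊢
    exact ⟨hi.2, by rw [Nat.mul_add_mod, Nat.mod_eq_of_lt hr]⟩
  · intro i _ j _ hij
    have : t * i = t * j := by simpa using hij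
    exact Nat.eq_of_mul_eq_mul_left (by omega) this
  · intro a ha
    rw [Finset.mem_filter] at ha
    have e : t * (a / t) + r = a := by rw [← ha.2]; exact Nat.div_add_mod a t
    refine ⟨a / t, ?_, e⟩
    rw [Finset.mem_filter, Finset.mem_range, e]
    exact ⟨lt_of_le_of_lt (Nat.div_le_self a t) (hM a ha.1), ha.1⟩

theorem mem_tw_nonneg (t r j : ℕ) (l : BarPartition) :
    (j : ℤ) ∈ twistedRunner t r l ↔ t * j + r ∈ l.parts := by
  simp only [twistedRunner, Set.mem_setOf_eq]
  constructor
  · rintro (⟨_, h⟩ | ⟨h, _⟩)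
    · simpa using h
    · omega
  · intro h
    exact Or.inl ⟨by omega, by simpa using h⟩

theorem mem_tw_neg (t r j : ℕ) (l : BarPartition) :
    (-((j : ℤ) + 1)) ∈ twistedRunner t r l ↔ t * j + (t - r) ∉ l.parts := by
  have e : (-(-((j : ℤ) + 1) + 1)).toNat = j := by omega
  simp only [twistedRunner, Set.mem_setOf_eq, e]
  constructor
  · rintro (⟨h, _⟩ | ⟨_, h⟩)
    · omega
    · exact h
  · intro h
    exact Or.inr ⟨by omega, h⟩

open Classical in
theorem window_count (t r a b : ℕ) (hr : 1 ≤ r) (hrt : 2 * r < t) (l : BarPartition)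
    (ha : ∀ x ∈ l.parts, x < a) (hb : ∀ x ∈ l.parts, x < b) :
    ∑ j ∈ Finset.range (a + b), (if (-(a : ℤ) + (j : ℤ)) ∈ twistedRunner t r l then (1 : ℤ) else 0)
      = (runnerCount t r l : ℤ) - runnerCount t (t - r) l + a := by
  rw [Finset.sum_range_add, ← Finset.sum_range_reflect]
  have h1 : ∑ j ∈ Finset.range b,
      (if (-(a : ℤ) + ((a + j : ℕ) : ℤ)) ∈ twistedRunner t r l then (1 : ℤ) else 0)
      = runnerCount t r l := by
    rw [runnerCount_slots t r b (by omega) l hb, Finset.card_filter, Nat.cast_sum]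
    refine Finset.sum_congr rfl fun j _ => ?_
    have e : (-(a : ℤ) + ((a + j : ℕ) : ℤ)) = j := by push_cast; ring
    rw [e, mem_tw_nonneg]
    split_ifs <;> simp
  have h2 : ∑ j ∈ Finset.range a,
      (if (-(a : ℤ) + ((a - 1 - j : ℕ) : ℤ)) ∈ twistedRunner t r l then (1 : ℤ) else 0)
      = a - runnerCount t (t - r) l := by
    rw [runnerCount_slots t (t - r) a (by omega) l ha, Finset.card_filter, Nat.cast_sum]
    have e0 : (a : ℤ) = ∑ j ∈ Finset.range a, (1 : ℤ) := by simp
    conv_rhs => rw [e0]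
    rw [← Finset.sum_sub_distrib]
    refine Finset.sum_congr rfl fun j hj => ?_
    rw [Finset.mem_range] at hj
    have e : (-(a : ℤ) + ((a - 1 - j : ℕ) : ℤ)) = -((j : ℤ) + 1) := by omega
    rw [e]
    by_cases hh : t * j + (t - r) ∈ l.parts
    · rw [if_neg (by rw [mem_tw_neg]; exact not_not.2 hh), if_pos hh]; simp
    · rw [if_pos (by rw [mem_tw_neg]; exact hh), if_neg hh]; simp
  rw [h1, h2]
  ring

theorem mem_shift (t r : ℕ) (l m : BarPartition) (c : ℤ)
    (h : twistedRunner t r m = (fun i => i + c) '' twistedRunner t r l) (i : ℤ) :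
    i ∈ twistedRunner t r m ↔ i - c ∈ twistedRunner t r l := by
  rw [h]
  constructor
  · rintro ⟨x, hx, rfl⟩
    simpa using hx
  · intro hx
    exact ⟨i - c, hx, by simp⟩

theorem charge_shift (t r : ℕ) (hr : 1 ≤ r) (hrt : 2 * r < t) (l m : BarPartition) (c : ℤ)
    (h : twistedRunner t r m = (fun i => i + c) '' twistedRunner t r l) :
    (runnerCount t r m : ℤ) - runnerCount t (t - r) m
      = (runnerCount t r l : ℤ) - runnerCount t (t - r) l + c := by
  classical
  set n := (l.parts.sup id) + (m.parts.sup id) + 1 with hn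
  have hl : ∀ x ∈ l.parts, x < n := fun x hx => by
    have : x ≤ l.parts.sup id := Finset.le_sup (f := id) hx
    omega
  have hm : ∀ x ∈ m.parts, x < n := fun x hx => by
    have : x ≤ m.parts.sup id := Finset.le_sup (f := id) hx
    omega
  obtain ⟨a', ha'⟩ : ∃ a' : ℕ, (a' : ℤ) = n + c.natAbs + c :=
    ⟨(n + c.natAbs + c).toNat, by omega⟩
  obtain ⟨b', hb'⟩ : ∃ b' : ℕ, (b' : ℤ) = n + c.natAbs - c :=
    ⟨(n + c.natAbs - c).toNat, by omega⟩
  have w1 := window_count t r (n + c.natAbs) (n + c.natAbs) hr hrt m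
    (fun x hx => by have := hm x hx; omega) (fun x hx => by have := hm x hx; omega)
  have w2 := window_count t r a' b' hr hrt l
    (fun x hx => by have := hl x hx; omega) (fun x hx => by have := hl x hx; omega)
  have e : a' + b' = (n + c.natAbs) + (n + c.natAbs) := by omega
  rw [e] at w2
  have e2 : ∀ j : ℕ, ((-((n + c.natAbs : ℕ) : ℤ) + (j : ℤ)) ∈ twistedRunner t r m) ↔
      (-(a' : ℤ) + (j : ℤ)) ∈ twistedRunner t r l := fun j => by
    rw [mem_shift t r l m c h]
    have : (-((n + c.natAbs : ℕ) : ℤ) + (j : ℤ)) - c = -(a' : ℤ) + (j : ℤ) := by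
      omega
    rw [this]
  simp only [e2] at w1
  rw [w2] at w1
  omega

theorem runnerCount_le (t r q : ℕ) (l m : BarPartition)
    (h : ∀ j : ℕ, t * j + r ∈ l.parts → t * (j + q) + r ∈ m.parts) :
    runnerCount t r l ≤ runnerCount t r m := by
  apply Finset.card_le_card_of_injOn (fun a => a + t * q)
  · intro a ha
    rw [Finset.mem_coe, Finset.mem_filter] at ha
    rw [Finset.mem_coe, Finset.mem_filter]
    have e : t * (a / t) + r = a := by rw [← ha.2]; exact Nat.div_add_mod a t
    constructor
    · have := h (a / t) (by rw [e]; exact ha.1)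
      have e2 : t * (a / t + q) + r = a + t * q := by
        rw [mul_add]; omega
      rwa [e2] at this
    · rw [Nat.add_mul_mod_self_left]; exact ha.2
  · intro a _ b _ hab
    simpa using hab

theorem pair_ineq (t r : ℕ) (ht : 3 ≤ t) (hr : 1 ≤ r) (hrt : 2 * r < t)
    (l κ μ : BarPartition) (hκ : IsBarCoreOf t l κ) (hμ : IsBarCocoreOf t l μ) :
    ∃ d : ℕ, (runnerCount t r l + runnerCount t (t - r) l + 2 * d : ℕ) =
      (runnerCount t r κ + runnerCount t (t - r) κ)
      + (runnerCount t r μ + runnerCount t (t - r) μ) := by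
  obtain ⟨c, hc⟩ := hμ.2.2 r hr hrt
  have h1 := charge_shift t r hr hrt l μ c hc
  have h2 := sum_gw_star t r hr hrt _ _ hκ.1
  have h3 := sum_gw_star t r hr hrt _ _ hμ.1
  rw [sum_gw, sum_gw] at h2
  rw [sum_gw t r μ] at h3
  simp only [BarPartition.empty, Finset.sum_empty] at h3
  have h4 := core_pair t r ht hr hrt κ hκ.2
  rcases le_total c 0 with hc0 | hc0
  · have h5 : runnerCount t (t - r) l ≤ runnerCount t (t - r) μ := by
      apply runnerCount_le t (t - r) c.natAbs
      intro j hj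
      by_contra hn
      rw [← mem_tw_neg, mem_shift t r l μ c hc] at hn
      have e : -(((j + c.natAbs : ℕ) : ℤ) + 1) - c = -((j : ℤ) + 1) := by omega
      rw [e, mem_tw_neg] at hn
      exact hn hj
    exact ⟨runnerCount t (t - r) μ - runnerCount t (t - r) l, by omega⟩
  · have h5 : runnerCount t r l ≤ runnerCount t r μ := by
      apply runnerCount_le t r c.natAbs
      intro j hj
      rw [← mem_tw_nonneg, mem_shift t r l μ c hc]
      have e : ((j + c.natAbs : ℕ) : ℤ) - c = (j : ℤ) := by omega
      rw [e, mem_tw_nonneg]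
      exact hj
    exact ⟨runnerCount t r μ - runnerCount t r l, by omega⟩

theorem length_split (k : ℕ) (l : BarPartition) :
    l.length = runnerCount (2 * k + 1) 0 l + ∑ i ∈ Finset.range k,
      (runnerCount (2 * k + 1) (i + 1) l + runnerCount (2 * k + 1) (2 * k + 1 - (i + 1)) l) := by
  have h1 : l.length = ∑ r ∈ Finset.range (2 * k + 1), runnerCount (2 * k + 1) r l := by
    apply Finset.card_eq_sum_card_fiberwise
    intro a _
    simpa using Nat.mod_lt a (by omega : 0 < 2 * k + 1)
  rw [h1, Finset.sum_range_succ', add_comm, two_mul, Finset.sum_range_add, Finset.sum_add_distrib]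
  congr 2
  rw [← Finset.sum_range_reflect]
  refine Finset.sum_congr rfl fun j hj => ?_
  rw [Finset.mem_range] at hj
  congr 1
  omega

theorem runner_zero (t : ℕ) (ht : 3 ≤ t) (l m : BarPartition)
    (h : ∀ k : ℕ, t * k ∈ l.parts ↔ t * k ∈ m.parts) :
    runnerCount t 0 l = runnerCount t 0 m :=
  le_antisymm (runnerCount_le t 0 0 l m fun j hj => (h j).1 hj)
    (runnerCount_le t 0 0 m l fun j hj => (h j).2 hj)

/-- Let `t ≥ 3` be odd. For every bar-partition `λ` with `t`-bar core `κ`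
and `t`-bar cocore `μ` there is an integer `d ≥ 0` with `ℓ(λ) = ℓ(κ) + ℓ(μ) − 2d`; in
particular `ℓ(λ) ≤ ℓ(κ) + ℓ(μ)` and the difference is even. -/
theorem length_eq_barCore_add_barCocore_sub_two_mul (t : ℕ) (ht : 3 ≤ t) (htodd : Odd t)
    (l κ μ : BarPartition) (hκ : IsBarCoreOf t l κ) (hμ : IsBarCocoreOf t l μ) :
    (∃ d : ℕ, (l.length : ℤ) = (κ.length : ℤ) + μ.length - 2 * d) ∧
    l.length ≤ κ.length + μ.length ∧
    Even ((κ.length : ℤ) + μ.length - l.length) := by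
  have key : ∃ d : ℕ, l.length + 2 * d = κ.length + μ.length := by
    have hp : ∀ i : ℕ, ∃ d : ℕ, 2 * (i + 1) < t →
        (runnerCount t (i + 1) l + runnerCount t (t - (i + 1)) l + 2 * d : ℕ) =
        (runnerCount t (i + 1) κ + runnerCount t (t - (i + 1)) κ)
        + (runnerCount t (i + 1) μ + runnerCount t (t - (i + 1)) μ) := fun i => by
      by_cases hi : 2 * (i + 1) < t
      · obtain ⟨d, hd⟩ := pair_ineq t (i + 1) ht (by omega) hi l κ μ hκ hμ
        exact ⟨d, fun _ => hd⟩
      · exact ⟨0, fun h => absurd h hi⟩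
    choose d hd using hp
    have h0 := core_zero t ht κ hκ.2
    have h0' := runner_zero t ht l μ hμ.2.1
    obtain ⟨k, rfl⟩ := htodd
    refine ⟨∑ i ∈ Finset.range k, d i, ?_⟩
    rw [length_split k l, length_split k κ, length_split k μ, h0, h0', add_assoc, Finset.mul_sum,
      ← Finset.sum_add_distrib, Finset.sum_congr rfl (fun i hi => hd i (by
        rw [Finset.mem_range] at hi; omega)), Finset.sum_add_distrib]
    ring
  obtain ⟨d, hd⟩ := key
  exact ⟨⟨d, by omega⟩, by omega, ⟨d, by omega⟩⟩
end

section
/- Let t ≥ 3 be an odd integer. For every bar-partition λ, sgn(λ) = sgn(λ_(t̄))·sgn(λ^[t̄]), where λ_(t̄) is the t-bar core and λ^[t̄] the t-bar cocore of λ. -/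
open scoped BigOperators

/-- Membership in the doubled abacus. -/
def dbl (l : BarPartition) (x : ℤ) : Prop :=
  (0 ≤ x ∧ x.natAbs ∈ l.parts) ∨ (x < 0 ∧ x.natAbs ∉ l.parts)

/-- Toggle a part. -/
def tog (l : BarPartition) (a : ℕ) : BarPartition :=
  ⟨(symmDiff l.parts {a}).erase 0, by simp⟩

/-- Toggle the two parts involved in a move. -/
def mv (t : ℕ) (l : BarPartition) (x : ℤ) : BarPartition :=
  tog (tog l x.natAbs) (x - t).natAbs

theorem bp_ext {l m : BarPartition} (h : ∀ b, 0 < b → (b ∈ l.parts ↔ b ∈ m.parts)) : l = m := by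
  cases l with
  | mk p hp =>
    cases m with
    | mk q hq =>
      congr
      ext b
      rcases Nat.eq_zero_or_pos b with rfl | hb
      · simp [hp, hq]
      · exact h b hb

theorem mem_tog (l : BarPartition) (a b : ℕ) (hb : 0 < b) :
    b ∈ (tog l a).parts ↔ ((b ∈ l.parts ∧ b ≠ a) ∨ (b = a ∧ b ∉ l.parts)) := by
  have : b ≠ 0 := by omega
  simp [tog, Finset.mem_symmDiff, this]

theorem mem_mv (t : ℕ) (l : BarPartition) (x : ℤ) (b : ℕ) (hb : 0 < b) :
    b ∈ (mv t l x).parts ↔ ((b = x.natAbs) ↔ ((b = (x - t).natAbs) ↔ b ∈ l.parts)) := by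
  unfold mv
  rw [mem_tog _ _ _ hb, mem_tog _ _ _ hb]
  tauto

theorem mv_mirror (t : ℕ) (l : BarPartition) (x : ℤ) : mv t l (t - x) = mv t l x := by
  apply bp_ext
  intro b hb
  rw [mem_mv _ _ _ _ hb, mem_mv _ _ _ _ hb]
  have h1 : ((t : ℤ) - x).natAbs = (x - t).natAbs := by omega
  have h2 : ((t : ℤ) - x - t).natAbs = x.natAbs := by omega
  rw [h1, h2]
  tauto

theorem dbl_neg (l : BarPartition) (x : ℤ) (hx : x ≠ 0) : dbl l (-x) ↔ ¬ dbl l x := by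
  unfold dbl
  rw [Int.natAbs_neg]
  rcases lt_or_gt_of_ne hx with h | h
  · have h1 : 0 ≤ -x := by omega
    have h2 : ¬ (-x < 0) := by omega
    have h3 : ¬ (0 ≤ x) := by omega
    simp only [h, h1, h2, h3]; tauto
  · have h1 : ¬ (0 ≤ -x) := by omega
    have h2 : (-x < 0) := by omega
    have h3 : (0 ≤ x) := by omega
    have h4 : ¬ (x < 0) := by omega
    simp only [h1, h2, h3, h4]; tauto

theorem dbl_zero (l : BarPartition) : ¬ dbl l 0 := by
  simp [dbl, l.zero_not_mem]

theorem dbl_nat (l : BarPartition) (a : ℕ) : dbl l (a : ℤ) ↔ a ∈ l.parts := by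
  simp only [dbl, Int.natAbs_natCast]
  have h1 : (0 : ℤ) ≤ a := by omega
  have h2 : ¬ ((a : ℤ) < 0) := by omega
  simp only [h1, h2]; tauto

theorem dbl_mv (t : ℕ) (l : BarPartition) (x z : ℤ) (hz : z ≠ 0) :
    dbl (mv t l x) z ↔ ((z.natAbs = x.natAbs) ↔ ((z.natAbs = (x - t).natAbs) ↔ dbl l z)) := by
  have hb : 0 < z.natAbs := by omega
  unfold dbl
  rw [mem_mv _ _ _ _ hb]
  rcases lt_or_ge z 0 with h | h
  · have h3 : ¬ (0 ≤ z) := by omega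
    simp only [h, h3]; tauto
  · have h4 : ¬ (z < 0) := by omega
    simp only [h, h4]; tauto

theorem step_of_dbl (t : ℕ) (ht : 3 ≤ t) (htodd : Odd t) (l : BarPartition) (x : ℤ)
    (h1 : dbl l x) (h2 : ¬ dbl l (x - t)) : BarRemoval t l (mv t l x) := by
  have main : ∀ x : ℤ, 0 < x → dbl l x → ¬ dbl l (x - t) → BarRemoval t l (mv t l x) := by
    clear h1 h2 x
    intro x hx h1 h2
    obtain ⟨a, rfl⟩ := Int.eq_ofNat_of_zero_le hx.le
    rw [dbl_nat] at h1
    have ha : 0 < a := by omega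
    rcases lt_trichotomy a t with h | h | h
    · right; right
      have e : ((a : ℤ) - t) = -((t - a : ℕ) : ℤ) := by omega
      have e' : ((t - a : ℕ) : ℤ) ≠ 0 := by omega
      rw [e, dbl_neg _ _ e', dbl_nat, not_not] at h2
      refine ⟨a, h1, t - a, h2, ?_, by omega, ?_⟩
      · intro hh; obtain ⟨k, hk⟩ := htodd; omega
      · ext b
        rcases Nat.eq_zero_or_pos b with rfl | hb
        · simp [BarPartition.zero_not_mem]
        · rw [mem_mv _ _ _ _ hb, e]
          simp only [Int.natAbs_neg, Int.natAbs_natCast, Finset.mem_erase]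
          have hne : a ≠ t - a := by
            intro hh; obtain ⟨k, hk⟩ := htodd; omega
          by_cases p : b = a
          · subst p; tauto
          · by_cases q : b = t - a
            · subst q; tauto
            · tauto
    · right; left
      subst h
      refine ⟨h1, ?_⟩
      ext b
      rcases Nat.eq_zero_or_pos b with rfl | hb
      · simp [BarPartition.zero_not_mem]
      · rw [mem_mv _ _ _ _ hb]
        simp only [sub_self, Int.natAbs_natCast, Finset.mem_erase, Int.natAbs_zero]
        have : b ≠ 0 := by omega
        by_cases p : b = a
        · subst p; tauto
        · tauto
    · left
      have e : ((a : ℤ) - t) = ((a - t : ℕ) : ℤ) := by omega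
      rw [e, dbl_nat] at h2
      refine ⟨a, h1, h, h2, ?_⟩
      ext b
      rcases Nat.eq_zero_or_pos b with rfl | hb
      · have : a - t ≠ 0 := by omega
        simp [BarPartition.zero_not_mem, this.symm]
      · rw [mem_mv _ _ _ _ hb, e]
        simp only [Int.natAbs_natCast, Finset.mem_insert, Finset.mem_erase]
        have hne : a ≠ a - t := by omega
        by_cases p : b = a
        · subst p; tauto
        · by_cases q : b = a - t
          · subst q; tauto
          · tauto
  rcases lt_trichotomy x 0 with h | h | h
  · rw [← mv_mirror]
    apply main
    · omega
    · have : (t : ℤ) - x = -(x - t) := by ring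
      rw [this, dbl_neg _ _ (by omega)]; exact h2
    · have : (t : ℤ) - x - t = -x := by ring
      rw [this, dbl_neg _ _ (by omega), not_not]; exact h1
  · subst h; exact absurd h1 (dbl_zero l)
  · exact main x h h1 h2

theorem dbl_of_step (t : ℕ) (ht : 3 ≤ t) (l m : BarPartition)
    (h : BarRemoval t l m) : ∃ x : ℤ, 0 < x ∧ dbl l x ∧ ¬ dbl l (x - t) ∧ m = mv t l x := by
  have pos : ∀ a ∈ l.parts, 0 < a := fun a ha =>
    Nat.pos_of_ne_zero (fun h0 => l.zero_not_mem (h0 ▸ ha))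
  rcases h with ⟨a, ha, hlt, hn, hm⟩ | ⟨ha, hm⟩ | ⟨a, ha, b, hb, hab, hs, hm⟩
  · have e : ((a : ℤ) - t) = ((a - t : ℕ) : ℤ) := by omega
    refine ⟨a, by omega, (dbl_nat _ _).2 ha, ?_, ?_⟩
    · rw [e, dbl_nat]; exact hn
    · apply bp_ext
      intro c hc
      rw [mem_mv _ _ _ _ hc, e, hm]
      simp only [Int.natAbs_natCast, Finset.mem_insert, Finset.mem_erase]
      have hne : a ≠ a - t := by omega
      by_cases p : c = a
      · subst p; tauto
      · by_cases q : c = a - t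
        · subst q; tauto
        · tauto
  · refine ⟨t, by omega, (dbl_nat _ _).2 ha, ?_, ?_⟩
    · rw [sub_self]; exact dbl_zero l
    · apply bp_ext
      intro c hc
      rw [mem_mv _ _ _ _ hc, hm]
      simp only [sub_self, Int.natAbs_natCast, Finset.mem_erase, Int.natAbs_zero]
      have : c ≠ 0 := by omega
      by_cases p : c = t
      · subst p; tauto
      · tauto
  · have hb0 := pos b hb
    have ha0 := pos a ha
    have e : ((a : ℤ) - t) = -(b : ℤ) := by omega
    refine ⟨a, by omega, (dbl_nat _ _).2 ha, ?_, ?_⟩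
    · rw [e, dbl_neg _ _ (by omega), dbl_nat, not_not]; exact hb
    · apply bp_ext
      intro c hc
      rw [mem_mv _ _ _ _ hc, e, hm]
      simp only [Int.natAbs_neg, Int.natAbs_natCast, Finset.mem_erase]
      by_cases p : c = a
      · subst p; tauto
      · by_cases q : c = b
        · subst q; tauto
        · tauto

/-- Toggling changes an additive statistic by plus or minus the value. -/
theorem sum_tog (g : ℕ → ℤ) (g0 : g 0 = 0) (l : BarPartition) (a : ℕ) :
    ∑ b ∈ (tog l a).parts, g b
      = ∑ b ∈ l.parts, g b + (if a ∈ l.parts then - g a else g a) := by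
  by_cases ha : a ∈ l.parts
  · have : (tog l a).parts = l.parts.erase a := by
      ext b
      rcases Nat.eq_zero_or_pos b with rfl | hb
      · simp [BarPartition.zero_not_mem]
      · rw [mem_tog _ _ _ hb, Finset.mem_erase]
        by_cases p : b = a
        · subst p; tauto
        · tauto
    rw [this, if_pos ha, ← Finset.sum_erase_add _ _ ha]; ring
  · rw [if_neg ha]
    rcases Nat.eq_zero_or_pos a with rfl | hpos
    · have : tog l 0 = l := by
        apply bp_ext
        intro b hb
        rw [mem_tog _ _ _ hb]
        have : b ≠ 0 := by omega
        tauto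
      rw [this, g0, add_zero]
    · have : (tog l a).parts = insert a l.parts := by
        ext b
        rcases Nat.eq_zero_or_pos b with rfl | hb
        · simp [BarPartition.zero_not_mem, hpos.ne]
        · rw [mem_tog _ _ _ hb, Finset.mem_insert]
          by_cases p : b = a
          · subst p; tauto
          · tauto
      rw [this, Finset.sum_insert ha]; ring

theorem sgn_eq_prod (l : BarPartition) : l.sgn = ∏ a ∈ l.parts, (-1 : ℤ) ^ (a - 1) := by
  have h : l.size - l.length = ∑ a ∈ l.parts, (a - 1) := by
    unfold BarPartition.size BarPartition.length
    rw [Finset.sum_tsub_distrib]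
    · simp
    · intro a ha
      exact Nat.pos_of_ne_zero (fun h0 => l.zero_not_mem (h0 ▸ ha))
  rw [BarPartition.sgn, h, Finset.prod_pow_eq_pow_sum]

theorem eps_sq (n : ℕ) : (-1 : ℤ) ^ n * (-1) ^ n = 1 := by
  rw [← mul_pow]; simp

theorem sgn_tog (l : BarPartition) (a : ℕ) : (tog l a).sgn = (-1) ^ (a - 1) * l.sgn := by
  rw [sgn_eq_prod, sgn_eq_prod]
  by_cases ha : a ∈ l.parts
  · have : (tog l a).parts = l.parts.erase a := by
      ext b
      rcases Nat.eq_zero_or_pos b with rfl | hb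
      · simp [BarPartition.zero_not_mem]
      · rw [mem_tog _ _ _ hb, Finset.mem_erase]
        by_cases p : b = a
        · subst p; tauto
        · tauto
    rw [this, ← Finset.mul_prod_erase _ _ ha, ← mul_assoc, eps_sq, one_mul]
  · rcases Nat.eq_zero_or_pos a with rfl | hpos
    · have : tog l 0 = l := by
        apply bp_ext
        intro b hb
        rw [mem_tog _ _ _ hb]
        have : b ≠ 0 := by omega
        tauto
      rw [this]; simp
    · have : (tog l a).parts = insert a l.parts := by
        ext b
        rcases Nat.eq_zero_or_pos b with rfl | hb
        · simp [BarPartition.zero_not_mem, hpos.ne]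
        · rw [mem_tog _ _ _ hb, Finset.mem_insert]
          by_cases p : b = a
          · subst p; tauto
          · tauto
      rw [this, Finset.prod_insert ha]

/-- The sign factor of a move. -/
def eps (t : ℕ) (x : ℤ) : ℤ := (-1) ^ ((x - t).natAbs - 1) * (-1) ^ (x.natAbs - 1)

theorem sgn_mv (t : ℕ) (l : BarPartition) (x : ℤ) : (mv t l x).sgn = eps t x * l.sgn := by
  rw [mv, sgn_tog, sgn_tog, eps, mul_assoc]

theorem eps_mul_self (t : ℕ) (x : ℤ) : eps t x * eps t x = 1 := by
  unfold eps
  rw [mul_mul_mul_comm, eps_sq, eps_sq, one_mul]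

theorem eps_neg (t : ℕ) (htodd : Odd t) (x : ℤ) (h0 : x ≠ 0) (h1 : x - t ≠ 0) :
    eps t x = -1 := by
  unfold eps
  rw [← pow_add]
  apply Odd.neg_one_pow
  obtain ⟨k, hk⟩ := htodd
  rw [Nat.odd_iff]
  omega

/-- Charge is invariant under removal. -/
theorem charge_step (t : ℕ) (ht : 3 ≤ t) (g : ℤ → ℤ) (hodd : ∀ x, g (-x) = - g x)
    (hper : ∀ x, g (x - t) = g x) (l m : BarPartition) (h : BarRemoval t l m) :
    ∑ b ∈ m.parts, g b = ∑ b ∈ l.parts, g b := by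
  have g0 : g 0 = 0 := by have := hodd 0; simp at this; omega
  obtain ⟨x, hx, h1, h2, rfl⟩ := dbl_of_step t ht l m h
  unfold mv
  rw [sum_tog (fun b => g b) (by simpa using g0), sum_tog (fun b => g b) (by simpa using g0)]
  obtain ⟨a, rfl⟩ := Int.eq_ofNat_of_zero_le hx.le
  rw [dbl_nat] at h1
  simp only [Int.natAbs_natCast]
  rw [if_pos h1]
  have hp := hper a
  suffices hh : (if ((a : ℤ) - t).natAbs ∈ (tog l a).parts then
      -g ((((a : ℤ) - t).natAbs : ℕ) : ℤ) else g ((((a : ℤ) - t).natAbs : ℕ) : ℤ)) = g (a - t) by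
    rw [hh, hp]; ring
  rcases lt_trichotomy a t with h | h | h
  · have e : ((a : ℤ) - t) = -((t - a : ℕ) : ℤ) := by omega
    have e' : ((t - a : ℕ) : ℤ) ≠ 0 := by omega
    rw [e, dbl_neg _ _ e', dbl_nat, not_not] at h2
    rw [e, Int.natAbs_neg, Int.natAbs_natCast, hodd]
    by_cases q : t - a = a
    · -- impossible when t is odd, but consistent anyway
      have h3 : g (((t - a : ℕ) : ℤ)) = 0 := by
        have := hodd ((t - a : ℕ) : ℤ)
        rw [← e, hp] at this
        rw [q] at this ⊢
        omega
      rw [h3]; simp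
    · rw [if_pos]
      rw [mem_tog _ _ _ (by omega)]
      left; exact ⟨h2, q⟩
  · subst h; simp [g0]
  · have e : ((a : ℤ) - t) = ((a - t : ℕ) : ℤ) := by omega
    rw [e, dbl_nat] at h2
    rw [e, Int.natAbs_natCast, if_neg]
    rw [mem_tog _ _ _ (by omega)]
    have : a - t ≠ a := by omega
    tauto

theorem charge_path (t : ℕ) (ht : 3 ≤ t) (g : ℤ → ℤ) (hodd : ∀ x, g (-x) = - g x)
    (hper : ∀ x, g (x - t) = g x) (l m : BarPartition)
    (h : Relation.ReflTransGen (BarRemoval t) l m) :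
    ∑ b ∈ m.parts, g b = ∑ b ∈ l.parts, g b := by
  induction h with
  | refl => rfl
  | tail _ h ih => rw [charge_step t ht g hodd hper _ _ h, ih]

/-- A core whose charges all vanish is empty. -/
theorem core_empty (t : ℕ) (ht : 3 ≤ t) (htodd : Odd t) (l : BarPartition) (hc : IsBarCore t l)
    (hz : ∀ g : ℤ → ℤ, (∀ x, g (-x) = - g x) → (∀ x, g (x - t) = g x) →
      ∑ b ∈ l.parts, g b = 0) : l = BarPartition.empty := by
  have down : ∀ x, dbl l x → dbl l (x - t) := by
    intro x hx
    by_contra h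
    exact hc _ (step_of_dbl t ht htodd l x hx h)
  have downn : ∀ (n : ℕ) x, dbl l x → dbl l (x - t * n) := by
    intro n
    induction n with
    | zero => intro x hx; simpa using hx
    | succ n ih =>
      intro x hx
      have := down _ (ih x hx)
      convert this using 1
      push_cast; ring
  have key : ∀ a ∈ l.parts, ∀ b ∈ l.parts, ¬ ((t : ℤ) ∣ (b : ℤ) + a) := by
    intro a ha b hb ⟨n, hn⟩
    have hb0 : 0 < b := Nat.pos_of_ne_zero (fun h0 => l.zero_not_mem (h0 ▸ hb))
    have hn0 : 0 ≤ n := by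
      by_contra h
      have : (t : ℤ) * n < 0 := mul_neg_of_pos_of_neg (by omega) (by omega)
      omega
    obtain ⟨k, rfl⟩ := Int.eq_ofNat_of_zero_le hn0
    have h1 := downn k a ((dbl_nat _ _).2 ha)
    have e : (a : ℤ) - t * k = -(b : ℤ) := by linarith
    rw [e, dbl_neg _ _ (by omega), dbl_nat] at h1
    exact h1 hb
  apply bp_ext
  intro a _
  simp only [BarPartition.empty, Finset.notMem_empty, iff_false]
  intro ha
  classical
  have h0 := hz (fun x => (if (t : ℤ) ∣ x - a then 1 else 0) - (if (t : ℤ) ∣ x + a then 1 else 0))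
    (by
      intro x
      have e1 : (t : ℤ) ∣ -x - a ↔ (t : ℤ) ∣ x + a := by
        rw [← dvd_neg]; ring_nf
      have e2 : (t : ℤ) ∣ -x + a ↔ (t : ℤ) ∣ x - a := by
        rw [← dvd_neg]; ring_nf
      simp only [e1, e2]; ring)
    (by
      intro x
      have e1 : (t : ℤ) ∣ x - t - a ↔ (t : ℤ) ∣ x - a := by
        rw [← dvd_sub_self_right (a := (t : ℤ)) (b := x - a)]; ring_nf
      have e2 : (t : ℤ) ∣ x - t + a ↔ (t : ℤ) ∣ x + a := by
        rw [← dvd_sub_self_right (a := (t : ℤ)) (b := x + a)]; ring_nf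
      simp only [e1, e2])
  have h1 : ∀ b ∈ l.parts, (0 : ℤ) ≤ (if (t : ℤ) ∣ (b : ℤ) - a then 1 else 0)
      - (if (t : ℤ) ∣ (b : ℤ) + a then 1 else 0) := by
    intro b hb
    rw [if_neg (key a ha b hb)]
    split_ifs <;> simp
  have h2 := (Finset.sum_eq_zero_iff_of_nonneg h1).1 h0 a ha
  rw [if_neg (key a ha a ha)] at h2
  simp at h2

/-- Same quotient, via the doubled abacus. -/
def SameQ (t : ℕ) (l m : BarPartition) : Prop :=
  (∀ k : ℕ, t * k ∈ l.parts ↔ t * k ∈ m.parts) ∧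
  ∀ r : ℕ, 1 ≤ r → 2 * r < t → ∃ c : ℤ, ∀ i : ℤ, dbl m (t * (i + c) + r) ↔ dbl l (t * i + r)

theorem tw_iff (t r : ℕ) (h1 : 1 ≤ r) (h2 : 2 * r < t) (l : BarPartition) (i : ℤ) :
    i ∈ twistedRunner t r l ↔ dbl l (t * i + r) := by
  unfold twistedRunner
  rw [Set.mem_setOf_eq]
  rcases lt_or_ge i 0 with h | h
  · obtain ⟨n, rfl⟩ : ∃ n : ℕ, i = -(n + 1) := ⟨(-(i + 1)).toNat, by omega⟩
    have e : ((t : ℤ) * (-((n : ℤ) + 1)) + r) = -((t * n + (t - r) : ℕ) : ℤ) := by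
      push_cast [show r ≤ t by omega]; ring
    have e2 : (-(-((n : ℤ) + 1) + 1)).toNat = n := by omega
    rw [e, dbl_neg _ _ (by have : 0 < t * n + (t - r) := by omega
                           omega), dbl_nat, e2]
    have h3 : ¬ (0 ≤ -((n : ℤ) + 1)) := by omega
    simp only [h, h3]; tauto
  · obtain ⟨n, rfl⟩ := Int.eq_ofNat_of_zero_le h
    have e : ((t : ℤ) * n + r) = ((t * n + r : ℕ) : ℤ) := by push_cast; ring
    rw [e, dbl_nat]
    have h3 : ¬ ((n : ℤ) < 0) := by omega
    simp only [h, h3, Int.toNat_natCast]; tauto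

theorem sameQ_of (t : ℕ) (l m : BarPartition) (h : HasSameBarQuotient t l m) : SameQ t l m := by
  refine ⟨h.1, ?_⟩
  intro r h1 h2
  obtain ⟨c, hc⟩ := h.2 r h1 h2
  refine ⟨c, fun i => ?_⟩
  rw [← tw_iff t r h1 h2, ← tw_iff t r h1 h2, hc]
  simp

theorem sameQ_symm (t : ℕ) (l m : BarPartition) (h : SameQ t l m) : SameQ t m l := by
  refine ⟨fun k => (h.1 k).symm, ?_⟩
  intro r h1 h2
  obtain ⟨c, hc⟩ := h.2 r h1 h2
  refine ⟨-c, fun i => ?_⟩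
  rw [← hc]
  ring_nf

theorem abs_iff (t r s : ℕ) (hr : 2 * r < t) (hs1 : 1 ≤ s) (hs : 2 * s < t) (i j : ℤ) :
    ((t : ℤ) * i + s).natAbs = ((t : ℤ) * j + r).natAbs ↔ (s = r ∧ i = j) := by
  constructor
  · intro h
    rcases Int.natAbs_eq_natAbs_iff.1 h with h | h
    · have h3 : (t : ℤ) * (i - j) = r - s := by linarith
      have h4 : i - j = 0 := by
        by_contra hne
        rcases lt_or_gt_of_ne hne with hh | hh <;> nlinarith
      rw [h4] at h3
      simp at h3
      constructor <;> omega
    · exfalso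
      have h3 : (t : ℤ) * (i + j) = - (r + s) := by linarith
      have h4 : i + j = 0 ∨ i + j ≤ -1 ∨ 1 ≤ i + j := by omega
      rcases h4 with hh | hh | hh
      · rw [hh] at h3; simp at h3; omega
      · nlinarith
      · nlinarith
  · rintro ⟨rfl, rfl⟩; rfl

theorem ne_zero_tw (t r : ℕ) (h1 : 1 ≤ r) (hr : 2 * r < t) (i : ℤ) : (t : ℤ) * i + r ≠ 0 := by
  intro h
  have := (abs_iff t 0 r (by omega) h1 hr i 0).1 (by rw [h]; simp)
  omega

theorem dbl_mv_tw (t r s : ℕ) (hr : 2 * r < t) (hs1 : 1 ≤ s) (hs : 2 * s < t)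
    (l : BarPartition) (i j : ℤ) :
    dbl (mv t l (t * j + r)) (t * i + s) ↔
      ((s = r ∧ i = j) ↔ ((s = r ∧ i = j - 1) ↔ dbl l (t * i + s))) := by
  rw [dbl_mv _ _ _ _ (ne_zero_tw t s hs1 hs i), abs_iff t r s hr hs1 hs]
  have e : (t : ℤ) * j + r - t = t * (j - 1) + r := by ring
  rw [e, abs_iff t r s hr hs1 hs]

theorem mem_mv_zero (t r : ℕ) (hr1 : 1 ≤ r) (hr : 2 * r < t) (l : BarPartition) (j : ℤ) (k : ℕ) :
    t * k ∈ (mv t l (t * j + r)).parts ↔ t * k ∈ l.parts := by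
  rcases Nat.eq_zero_or_pos k with rfl | hk
  · simp [BarPartition.zero_not_mem]
  · have hpos : 0 < t * k := Nat.mul_pos (by omega) hk
    rw [mem_mv _ _ _ _ hpos]
    have key : ∀ j : ℤ, t * k ≠ ((t : ℤ) * j + r).natAbs := by
      intro j h
      have := (abs_iff t 0 r (by omega) hr1 hr j k).1 (by rw [← h]; simp [Int.natAbs_mul])
      omega
    have e : (t : ℤ) * j + r - t = t * (j - 1) + r := by ring
    have k1 := key j
    have k2 := key (j - 1)
    rw [e]
    tauto

/-- Bisimulation step. -/
theorem bisim (t : ℕ) (ht : 3 ≤ t) (htodd : Odd t) (l m l' : BarPartition)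
    (hq : SameQ t l m) (hs : BarRemoval t l l') :
    ∃ m', BarRemoval t m m' ∧ SameQ t l' m' ∧ l'.sgn * m'.sgn = l.sgn * m.sgn := by
  have hx : ∃ (r : ℕ) (j : ℤ), 2 * r < t ∧ (r = 0 → 0 < j) ∧ dbl l (t * j + r) ∧
      ¬ dbl l (t * j + r - t) ∧ l' = mv t l (t * j + r) := by
    obtain ⟨x, hx, h1, h2, h3⟩ := dbl_of_step t ht l l' hs
    have hd := Int.mul_ediv_add_emod x t
    have hm0 := Int.emod_nonneg x (show (t : ℤ) ≠ 0 by omega)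
    have hm1 := Int.emod_lt_of_pos x (show (0 : ℤ) < t by omega)
    obtain ⟨r, hr⟩ := Int.eq_ofNat_of_zero_le hm0
    rw [hr] at hd hm1
    by_cases hlt : 2 * r < t
    · refine ⟨r, x / t, hlt, ?_, ?_⟩
      · rintro rfl
        by_contra hc
        have : (t : ℤ) * (x / t) ≤ 0 := mul_nonpos_of_nonneg_of_nonpos (by omega) (by omega)
        simp at hd
        omega
      · rw [hd]; exact ⟨h1, h2, h3⟩
    · obtain ⟨k, hk⟩ := htodd
      have hrt : r < t := by exact_mod_cast hm1
      refine ⟨t - r, -(x / t), by omega, by omega, ?_⟩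
      have e : (t : ℤ) * (-(x / t)) + ((t - r : ℕ) : ℤ) = t - x := by
        push_cast [hrt.le]; linarith
      rw [e, mv_mirror]
      have hxt : x - t ≠ 0 := by
        intro h
        have : x = t := by omega
        rw [this] at hr
        simp at hr
        omega
      refine ⟨?_, ?_, h3⟩
      · have : (t : ℤ) - x = -(x - t) := by ring
        rw [this, dbl_neg _ _ hxt]; exact h2
      · have : (t : ℤ) - x - t = -x := by ring
        rw [this, dbl_neg _ _ (by omega), not_not]; exact h1
  clear hs
  obtain ⟨r, j, hr, hj, h1, h2, rfl⟩ := hx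
  rcases Nat.eq_zero_or_pos r with rfl | hr1
  · obtain ⟨k, rfl⟩ : ∃ k : ℕ, j = k + 1 := ⟨(j - 1).toNat, by have := hj rfl; omega⟩
    have e1 : (t : ℤ) * (k + 1) + (0 : ℕ) = ((t * (k + 1) : ℕ) : ℤ) := by push_cast; ring
    have e2 : (t : ℤ) * (k + 1) + (0 : ℕ) - t = ((t * k : ℕ) : ℤ) := by push_cast; ring
    refine ⟨mv t m (t * (k + 1) + (0 : ℕ)), ?_, ⟨?_, ?_⟩, ?_⟩
    · apply step_of_dbl t ht htodd
      · rw [e1, dbl_nat] at h1 ⊢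
        exact (hq.1 _).1 h1
      · rw [e2, dbl_nat] at h2 ⊢
        rwa [← hq.1]
    · intro n
      rcases Nat.eq_zero_or_pos n with rfl | hn
      · simp [BarPartition.zero_not_mem]
      · have hpos : 0 < t * n := Nat.mul_pos (by omega) hn
        rw [mem_mv _ _ _ _ hpos, mem_mv _ _ _ _ hpos, hq.1]
    · intro s hs1 hs
      obtain ⟨c, hc⟩ := hq.2 s hs1 hs
      refine ⟨c, fun i => ?_⟩
      rw [dbl_mv_tw t 0 s (by omega) hs1 hs, dbl_mv_tw t 0 s (by omega) hs1 hs, hc]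
      have : s ≠ 0 := by omega
      simp [this]
    · rw [sgn_mv, sgn_mv, mul_mul_mul_comm, eps_mul_self, one_mul]
  · obtain ⟨c, hc⟩ := hq.2 r hr1 hr
    refine ⟨mv t m (t * (j + c) + r), ?_, ⟨?_, ?_⟩, ?_⟩
    · apply step_of_dbl t ht htodd
      · rw [hc]; exact h1
      · have e : (t : ℤ) * (j + c) + r - t = t * ((j - 1) + c) + r := by ring
        rw [e, hc]
        convert h2 using 2
        ring
    · intro n
      rw [mem_mv_zero t r hr1 hr, mem_mv_zero t r hr1 hr]
      exact hq.1 n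
    · intro s hs1 hs
      by_cases hsr : s = r
      · subst hsr
        refine ⟨c, fun i => ?_⟩
        rw [dbl_mv_tw t s s hr hs1 hs, dbl_mv_tw t s s hr hs1 hs, hc]
        have e1 : i + c = j + c ↔ i = j := by omega
        have e2 : i + c = j + c - 1 ↔ i = j - 1 := by omega
        rw [e1, e2]
      · obtain ⟨d, hd⟩ := hq.2 s hs1 hs
        refine ⟨d, fun i => ?_⟩
        rw [dbl_mv_tw t r s hr hs1 hs, dbl_mv_tw t r s hr hs1 hs, hd]
        simp [hsr]
    · have n1 : ∀ j : ℤ, eps t (t * j + r) = -1 := by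
        intro j
        apply eps_neg t htodd _ (ne_zero_tw t r hr1 hr j)
        have e : (t : ℤ) * j + r - t = t * (j - 1) + r := by ring
        rw [e]
        exact ne_zero_tw t r hr1 hr _
      rw [sgn_mv, sgn_mv, n1, n1]; ring

theorem bisim_path (t : ℕ) (ht : 3 ≤ t) (htodd : Odd t) (l m κ : BarPartition)
    (hq : SameQ t l m) (hs : Relation.ReflTransGen (BarRemoval t) l κ) :
    ∃ m', Relation.ReflTransGen (BarRemoval t) m m' ∧ SameQ t κ m' ∧
      κ.sgn * m'.sgn = l.sgn * m.sgn := by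
  induction hs with
  | refl => exact ⟨m, .refl, hq, rfl⟩
  | tail _ h ih =>
    obtain ⟨m1, p1, q1, s1⟩ := ih
    obtain ⟨m2, p2, q2, s2⟩ := bisim t ht htodd _ m1 _ q1 h
    exact ⟨m2, p1.tail p2, q2, s2.trans s1⟩

/-- Let `t ≥ 3` be odd. For every bar-partition `λ` with `t`-bar core `κ`
and `t`-bar cocore `μ`, one has `sgn(λ) = sgn(κ)·sgn(μ)`. -/
theorem sgn_eq_sgn_barCore_mul_sgn_barCocore (t : ℕ) (ht : 3 ≤ t) (htodd : Odd t)
    (l κ μ : BarPartition) (hκ : IsBarCoreOf t l κ) (hμ : IsBarCocoreOf t l μ) :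
    l.sgn = κ.sgn * μ.sgn := by
  obtain ⟨m', hp, hq, hs⟩ := bisim_path t ht htodd l μ κ (sameQ_of t l μ hμ.2) hκ.1
  have hcore : IsBarCore t m' := by
    intro ν hν
    obtain ⟨n, hn, _⟩ := bisim t ht htodd m' κ ν (sameQ_symm t _ _ hq) hν
    exact hκ.2 n hn
  have hm : m' = BarPartition.empty := by
    apply core_empty t ht htodd m' hcore
    intro g g1 g2
    rw [charge_path t ht g g1 g2 _ _ hp, ← charge_path t ht g g1 g2 _ _ hμ.1]
    simp [BarPartition.empty]
  rw [hm] at hs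
  have he : BarPartition.empty.sgn = 1 := by
    simp [sgn_eq_prod, BarPartition.empty]
  have hsq : μ.sgn * μ.sgn = 1 := eps_sq _
  rw [he, mul_one] at hs
  rw [hs, mul_assoc, hsq, mul_one]
end
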